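/- arXiv:0811.2806 — 2 statements merged into one kernel-verified Lean document; each statement's English description precedes it below -/
import Mathlib

section
/- There is a constant D_n such that for every r > 0, the Haar probability measure of the set of unimodular lattices Λ ∈ X_n containing a nonzero vector of Euclidean norm less than e^{-r} is at most D_n e^{-nr}. -/
open MeasureTheory Filter Matrix Real ENNReal

noncomputable section

/-- `SL(n, ℝ)`. -/
abbrev SLR (n : ℕ) := Matrix.SpecialLinearGroup (Fin n) ℝ

instance (n : ℕ) : TopologicalSpace (SLR n) :=
  TopologicalSpace.induced (fun g => (g : Matrix (Fin n) (Fin n) ℝ)) inferInstance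

/-- The image of `SL(n, ℤ)` in `SL(n, ℝ)`. -/
def latticeGamma (n : ℕ) : Subgroup (SLR n) :=
  (Matrix.SpecialLinearGroup.map (n := Fin n) (Int.castRingHom ℝ)).range

/-- The space of unimodular lattices `X_n = SL(n,ℝ)/SL(n,ℤ)`. -/
abbrev LatticeSpace (n : ℕ) := SLR n ⧸ latticeGamma n

instance (n : ℕ) : MeasurableSpace (LatticeSpace n) := borel _

/-- The real vector `g · m` of the lattice `g ℤⁿ` coming from the integer vector `m`. -/
def vecOf (n : ℕ) (g : SLR n) (m : Fin n → ℤ) : Fin n → ℝ :=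
  (g : Matrix (Fin n) (Fin n) ℝ).mulVec (fun i => (m i : ℝ))

/-- Euclidean norm on `Fin n → ℝ`. -/
def eNorm {n : ℕ} (v : Fin n → ℝ) : ℝ := ‖(WithLp.equiv 2 (Fin n → ℝ)).symm v‖

/-- The lattice `Λ` contains a nonzero vector lying in `A`. -/
def Intersects (n : ℕ) (Λ : LatticeSpace n) (A : Set (Fin n → ℝ)) : Prop :=
  ∀ g : SLR n, (QuotientGroup.mk g : LatticeSpace n) = Λ →
    ∃ m : Fin n → ℤ, m ≠ 0 ∧ vecOf n g m ∈ A

/-- `α₁(Λ) = sup_{0 ≠ v ∈ Λ} 1/‖v‖` (Euclidean norm). -/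
def alpha1 (n : ℕ) (Λ : LatticeSpace n) : ℝ :=
  sSup {r : ℝ | ∃ g : SLR n, (QuotientGroup.mk g : LatticeSpace n) = Λ ∧
    ∃ m : Fin n → ℤ, m ≠ 0 ∧ r = 1 / eNorm (vecOf n g m)}

/-
Counting points in cosets lifts `μ` from `SL(n, ℝ) / SL(n, ℤ)` to a left-invariant measure on
`SL(n, ℝ)`. By uniqueness of Haar measure it is a multiple of the cone measure
`s ↦ vol {t g | g ∈ s, 0 < t ≤ 1}`, so a set of lattices has measure at most a constant times the
cone measure of any set of matrices whose columns span all of them.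

A lattice with a vector shorter than `ρ` has a basis whose first vector is that short. Clear the
rest of the first column with a nonzero entry `a` of it as pivot: the row of the pivot can be
reduced modulo `a` by unipotent integral column operations, and the Schur complement, rescaled to
determinant `± det`, can be moved by `SL(n - 1, ℤ)` into a finite-volume domain for matrices of size
`n - 1`. The rescaling turns (column, row / `a`, Schur complement) into volume-preserving
coordinates, so the matrices so obtained have volume `O(ρ ^ n)`. With `ρ = 2`, Minkowski's theorem
shows that the same set is a finite-volume domain in size `n`, which drives the induction.
-/

section MatrixVolume

instance {m n : Type*} [Finite m] [Finite n] : PolishSpace (Matrix m n ℝ) :=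
  inferInstanceAs (PolishSpace (m → n → ℝ))

instance {m n : Type*} [Finite m] [Finite n] : LocallyCompactSpace (Matrix m n ℝ) :=
  inferInstanceAs (LocallyCompactSpace (m → n → ℝ))

variable {m n α : Type*} [Fintype m] [Fintype n]

instance : MeasureSpace (Matrix m n ℝ) := inferInstanceAs (MeasureSpace (m → n → ℝ))

instance : BorelSpace (Matrix m n ℝ) := inferInstanceAs (BorelSpace (m → n → ℝ))

instance : (volume : Measure (Matrix m n ℝ)).IsAddHaarMeasure :=
  have : (volume : Measure (n → ℝ)).IsAddHaarMeasure := inferInstance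
  Measure.pi.isAddHaarMeasure fun _ : m => (volume : Measure (n → ℝ))

instance : SigmaFinite (volume : Measure (Matrix m n ℝ)) :=
  inferInstanceAs (SigmaFinite (volume : Measure (m → n → ℝ)))

theorem measurable_matrix_apply (i : m) (j : n) : Measurable fun M : Matrix m n ℝ => M i j :=
  (continuous_id.matrix_elem i j).measurable

theorem measurable_matrix_iff [MeasurableSpace α] {f : α → Matrix m n ℝ} :
    Measurable f ↔ ∀ i j, Measurable fun x => f x i j := by
  refine (measurable_pi_iff (X := fun _ : m => n → ℝ)).trans (forall_congr' fun i => ?_)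
  exact measurable_pi_iff

variable [DecidableEq m]

theorem det_mulLeftLinearMap {R : Type*} [CommRing R] (A : Matrix m m R) :
    LinearMap.det (mulLeftLinearMap n R A) = A.det ^ Fintype.card n := by
  classical
  let e : (n → m → R) ≃ₗ[R] Matrix m n R := transposeLinearEquiv n m R R
  let f : (n → m → R) →ₗ[R] n → m → R :=
    LinearMap.pi fun j => (toLin' A).comp (LinearMap.proj j)
  have hconj : mulLeftLinearMap n R A = e ∘ₗ f ∘ₗ e.symm :=
    LinearMap.ext fun _ => Matrix.ext fun _ _ => rfl
  rw [hconj, LinearMap.det_conj, LinearMap.det_pi]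
  simp

theorem measurePreserving_matrix_mul_left {A : Matrix m m ℝ} (hA : A.det = 1) :
    MeasurePreserving fun M : Matrix m n ℝ => A * M := by
  let f : (m → n → ℝ) →ₗ[ℝ] m → n → ℝ := mulLeftLinearMap n ℝ A
  have hdet : LinearMap.det f = 1 := by
    rw [show LinearMap.det f = _ from det_mulLeftLinearMap A, hA, one_pow]
  refine ⟨(continuous_const.matrix_mul continuous_id).measurable, ?_⟩
  have hvol : (volume : Measure (m → n → ℝ)).IsAddHaarMeasure :=
    inferInstanceAs (volume : Measure (Matrix m n ℝ)).IsAddHaarMeasure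
  have hmap := Measure.map_linearMap_addHaar_eq_smul_addHaar (f := f) volume (by simp [hdet])
  rwa [hdet, inv_one, abs_one, ofReal_one, one_smul] at hmap

end MatrixVolume

section PivotCoordinates

theorem measurePreserving_prodMap_smul {E F : Type*}
    [NormedAddCommGroup E] [NormedSpace ℝ E] [FiniteDimensional ℝ E] [MeasurableSpace E]
    [BorelSpace E] [NormedAddCommGroup F] [NormedSpace ℝ F] [FiniteDimensional ℝ F]
    [MeasurableSpace F] [BorelSpace F] (μ : Measure E) [μ.IsAddHaarMeasure]
    (ν : Measure F) [ν.IsAddHaarMeasure] {a b : ℝ} (ha : a ≠ 0) (hb : b ≠ 0)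
    (hab : |a| ^ Module.finrank ℝ E * |b| ^ Module.finrank ℝ F = 1) :
    MeasurePreserving (Prod.map (a • ·) (b • ·)) (μ.prod ν) (μ.prod ν) := by
  have hma : Measurable fun x : E => a • x := measurable_const_smul a
  have hmb : Measurable fun y : F => b • y := measurable_const_smul b
  refine ⟨hma.prodMap hmb, ?_⟩
  have hscale : ENNReal.ofReal |(a ^ Module.finrank ℝ E)⁻¹| *
      ENNReal.ofReal |(b ^ Module.finrank ℝ F)⁻¹| = 1 := by
    rw [← ENNReal.ofReal_mul (abs_nonneg _), abs_inv, abs_inv, abs_pow, abs_pow, ← mul_inv, hab,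
      inv_one, ENNReal.ofReal_one]
  rw [← Measure.map_prod_map μ ν hma hmb, Measure.map_addHaar_smul μ ha,
    Measure.map_addHaar_smul ν hb, Measure.prod_smul_left, Measure.prod_smul_right, smul_smul,
    hscale, one_smul]

variable {k : ℕ} (p : Fin (k + 1))

/-- The Schur complement in `M` of the entry `M p 0` of the first column. -/
def pivotSchur {K : Type*} [Field K] (M : Matrix (Fin (k + 1)) (Fin (k + 1)) K) :
    Matrix (Fin k) (Fin k) K :=
  of fun i j => M (p.succAbove i) j.succ - M (p.succAbove i) 0 * (M p j.succ / M p 0)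

theorem det_eq_mul_det_pivotSchur {K : Type*} [Field K]
    (M : Matrix (Fin (k + 1)) (Fin (k + 1)) K) (hp : M p 0 ≠ 0) :
    M.det = (-1) ^ (p : ℕ) * M p 0 * (pivotSchur p M).det := by
  let c : Fin (k + 1) → K := fun i => if i = p then 0 else M i 0 / M p 0
  let A : Matrix (Fin (k + 1)) (Fin (k + 1)) K := of fun i j => M i j - c i * M p j
  have hdet : M.det = A.det :=
    det_eq_of_forall_row_eq_smul_add_const c p (by simp [c]) fun i j => by simp [A, c]
  have hzero (i : Fin (k + 1)) (hi : i ≠ p) : A i 0 = 0 := by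
    simp [A, c, hi, div_mul_cancel₀ _ hp]
  have hpivot : A p 0 = M p 0 := by simp [A, c]
  have hsub : A.submatrix p.succAbove Fin.succ = pivotSchur p M := by
    ext i j
    simp [A, c, pivotSchur, p.succAbove_ne i, mul_div_assoc, div_mul_eq_mul_div]
  rw [hdet, det_succ_column_zero, Finset.sum_eq_single p (fun i _ hi => by simp [hzero i hi])
    (by simp), hpivot, hsub]

/-- The Schur complement of the pivot `M p 0`, rescaled so that for `k ≠ 0` its determinant is that
of `M` up to sign. -/
def pivotCore (M : Matrix (Fin (k + 1)) (Fin (k + 1)) ℝ) : Matrix (Fin k) (Fin k) ℝ :=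
  |M p 0| ^ (k : ℝ)⁻¹ • pivotSchur p M

variable {p} in
theorem abs_det_pivotCore (hk : k ≠ 0) {M : Matrix (Fin (k + 1)) (Fin (k + 1)) ℝ}
    (hp : M p 0 ≠ 0) : |(pivotCore p M).det| = |M.det| := by
  rw [pivotCore, det_smul, Fintype.card_fin, Real.rpow_inv_natCast_pow (abs_nonneg _) hk,
    det_eq_mul_det_pivotSchur p M hp]
  simp [abs_mul]

theorem pivotCore_smul {t : ℝ} (ht : 0 < t) (M : Matrix (Fin (k + 1)) (Fin (k + 1)) ℝ) :
    pivotCore p (t • M) = (t ^ (k : ℝ)⁻¹ * t) • pivotCore p M := by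
  have hschur : pivotSchur p (t • M) = t • pivotSchur p M := by
    ext i j
    simp only [pivotSchur, of_apply, Matrix.smul_apply, smul_eq_mul, mul_div_mul_left _ _ ht.ne']
    ring
  rw [pivotCore, hschur, Matrix.smul_apply, smul_eq_mul, abs_mul, abs_of_pos ht,
    Real.mul_rpow ht.le (abs_nonneg _), pivotCore, smul_smul, smul_smul, mul_right_comm]

/-- The first column of `M`, the remainder of row `p` divided by its entry in that column, and the
rescaled Schur complement: coordinates on the matrices with `M p 0 ≠ 0` that preserve the volume. -/
def pivotCoords (M : Matrix (Fin (k + 1)) (Fin (k + 1)) ℝ) :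
    (Fin (k + 1) → ℝ) × (Fin k → ℝ) × Matrix (Fin k) (Fin k) ℝ :=
  (fun i => M i 0, fun j => M p j.succ / M p 0, pivotCore p M)

theorem measurePreserving_splitColumnRow : MeasurePreserving
    fun M : Matrix (Fin (k + 1)) (Fin (k + 1)) ℝ =>
      ((fun i => M i 0, fun j => M p j.succ, of fun i j => M (p.succAbove i) j.succ) :
        (Fin (k + 1) → ℝ) × (Fin k → ℝ) × Matrix (Fin k) (Fin k) ℝ) := by
  have hrows := volume_preserving_pi fun _ : Fin (k + 1) =>
    volume_preserving_piFinSuccAbove (fun _ : Fin (k + 1) => ℝ) 0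
  have hcolumn := volume_measurePreserving_arrowProdEquivProdArrow ℝ (Fin k → ℝ) (Fin (k + 1))
  have hpivot := volume_preserving_piFinSuccAbove (fun _ : Fin (k + 1) => Fin k → ℝ) p
  exact ((MeasurePreserving.id volume).prod hpivot).comp (hcolumn.comp hrows)

theorem measurePreserving_clearColumn {a : ℝ} (ha : a ≠ 0) (b : Fin k → ℝ) : MeasurePreserving
    fun z : (Fin k → ℝ) × Matrix (Fin k) (Fin k) ℝ =>
      ((fun j => z.1 j / a, |a| ^ (k : ℝ)⁻¹ • (z.2 - vecMulVec b fun j => z.1 j / a)) :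
        (Fin k → ℝ) × Matrix (Fin k) (Fin k) ℝ) := by
  let shear (y : Fin k → ℝ) (Z : Matrix (Fin k) (Fin k) ℝ) : Matrix (Fin k) (Fin k) ℝ :=
    Z - vecMulVec b fun j => y j / a
  have hshear : MeasurePreserving fun z : (Fin k → ℝ) × Matrix (Fin k) (Fin k) ℝ =>
      (z.1, shear z.1 z.2) := by
    have hmeas : Measurable (Function.uncurry shear) := by fun_prop
    exact (MeasurePreserving.id volume).skew_product hmeas
      (ae_of_all _ fun y => (measurePreserving_sub_right volume _).map_eq)
  have hpow : (|a| ^ (k : ℝ)⁻¹) ^ (k * k) = |a| ^ k := by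
    rcases eq_or_ne k 0 with rfl | hk
    · simp
    · rw [pow_mul, Real.rpow_inv_natCast_pow (abs_nonneg _) hk]
  have hscale : MeasurePreserving (Prod.map (a⁻¹ • ·) (|a| ^ (k : ℝ)⁻¹ • ·) :
      (Fin k → ℝ) × Matrix (Fin k) (Fin k) ℝ → _) := by
    have hvol : (volume : Measure (Fin k → Fin k → ℝ)).IsAddHaarMeasure :=
      inferInstanceAs (volume : Measure (Matrix (Fin k) (Fin k) ℝ)).IsAddHaarMeasure
    refine measurePreserving_prodMap_smul (F := Fin k → Fin k → ℝ) volume volume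
      (inv_ne_zero ha) (by positivity) ?_
    rw [Module.finrank_fin_fun, Module.finrank_pi_fintype]
    simp only [Module.finrank_fin_fun, Finset.sum_const, Finset.card_univ, Fintype.card_fin,
      smul_eq_mul]
    rw [abs_of_nonneg (by positivity : 0 ≤ |a| ^ (k : ℝ)⁻¹), hpow, ← mul_pow, abs_inv,
      inv_mul_cancel₀ (abs_ne_zero.2 ha), one_pow]
  convert hscale.comp hshear using 2 with z
  simp [shear, div_eq_inv_mul, Pi.smul_def]

theorem measurePreserving_pivotCoords : MeasurePreserving (pivotCoords p) := by
  let clear (c : Fin (k + 1) → ℝ) (z : (Fin k → ℝ) × Matrix (Fin k) (Fin k) ℝ) :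
      (Fin k → ℝ) × Matrix (Fin k) (Fin k) ℝ :=
    (fun j => z.1 j / c p,
      |c p| ^ (k : ℝ)⁻¹ • (z.2 - vecMulVec (fun i => c (p.succAbove i)) fun j => z.1 j / c p))
  have hmeas : Measurable (Function.uncurry clear) := by fun_prop
  have hclear : ∀ᵐ c : Fin (k + 1) → ℝ, Measure.map (clear c) volume = volume := by
    filter_upwards [Measure.ae_eval_ne (fun _ => volume) p 0] with c hc
    exact (measurePreserving_clearColumn hc _).map_eq
  exact ((MeasurePreserving.id volume).skew_product hmeas hclear).comp
    (measurePreserving_splitColumnRow p)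

end PivotCoordinates

section IntegerVectors

variable {ι : Type*}

theorem exists_basis_eq_smul [Finite ι] {R : Type*} [CommRing R] [IsDomain R]
    [IsPrincipalIdealRing R] (i : ι) (m : ι → R) :
    ∃ (b : Module.Basis ι R (ι → R)) (c : R), m = c • b i := by
  classical
  have := Fintype.ofFinite ι
  obtain ⟨r, snf⟩ := Submodule.smithNormalForm (Pi.basisFun R ι) (R ∙ m)
  obtain ⟨y, hy⟩ : ∃ y : R ∙ m, (y : ι → R) = m := ⟨⟨m, Submodule.mem_span_singleton_self m⟩, rfl⟩
  have hr : r ≤ 1 := by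
    rw [← Fintype.card_fin r, ← Module.finrank_eq_card_basis snf.bN]
    simpa using finrank_span_le_card (R := R) {m}
  have hsum : m = ∑ j, snf.bN.repr y j • snf.a j • snf.bM (snf.f j) := by
    conv_lhs => rw [← hy, ← snf.bN.sum_repr y]
    simp only [Submodule.coe_sum, Submodule.coe_smul, snf.snf]
  interval_cases r
  · exact ⟨snf.bM, 0, by simpa using hsum⟩
  · refine ⟨snf.bM.reindex (Equiv.swap (snf.f 0) i), snf.bN.repr y 0 * snf.a 0, ?_⟩
    simpa [smul_smul] using hsum

variable [Fintype ι]

theorem exists_specialLinearGroup_mulVec_single [DecidableEq ι] {R : Type*} [CommRing R]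
    [IsDomain R] [IsPrincipalIdealRing R] (i : ι) (m : ι → R) :
    ∃ (γ : Matrix.SpecialLinearGroup ι R) (c : R), (γ : Matrix ι ι R) *ᵥ Pi.single i c = m := by
  obtain ⟨b, c, hc⟩ := exists_basis_eq_smul i m
  let B : Matrix ι ι R := (Pi.basisFun R ι).toMatrix b
  obtain ⟨u, hu⟩ : IsUnit B.det := by
    have := (Pi.basisFun R ι).invertibleToMatrix b
    exact isUnit_det_of_invertible B
  refine ⟨⟨B * diagonal (Function.update (1 : ι → R) i ↑u⁻¹), ?_⟩, u * c, ?_⟩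
  · rw [det_mul, det_diagonal, Finset.prod_update_of_mem (Finset.mem_univ i), ← hu]
    simp
  · have hB : B *ᵥ Pi.single i c = c • b i := by
      ext j
      simp [B, Module.Basis.toMatrix_apply, mul_comm]
    change (B * diagonal _) *ᵥ _ = m
    rw [← mulVec_mulVec, diagonal_mulVec_single, Function.update_self, Units.inv_mul_cancel_left,
      hB, hc]

theorem volume_setOf_abs_mulVec_lt [DecidableEq ι] {M : Matrix ι ι ℝ} (h0 : M.det ≠ 0) (ρ : ℝ) :
    volume {x : ι → ℝ | ∀ i, |(M *ᵥ x) i| < ρ} =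
      ENNReal.ofReal |M.det⁻¹| * ENNReal.ofReal (2 * ρ) ^ Fintype.card ι := by
  have hset : {x : ι → ℝ | ∀ i, |(M *ᵥ x) i| < ρ} =
      toLin' M ⁻¹' Set.pi Set.univ fun _ => Set.Ioo (-ρ) ρ := by
    ext x
    simp [abs_lt]
  rw [hset, Measure.addHaar_preimage_linearMap volume (by rwa [LinearMap.det_toLin']),
    LinearMap.det_toLin', Real.volume_pi_Ioo]
  simp [two_mul]

theorem exists_int_abs_mulVec_lt [DecidableEq ι] {M : Matrix ι ι ℝ}
    (h0 : M.det ≠ 0) {ρ : ℝ} (hρ : 0 < ρ) (hM : |M.det| < ρ ^ Fintype.card ι) :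
    ∃ m : ι → ℤ, m ≠ 0 ∧ ∀ i, |(M *ᵥ fun j => (m j : ℝ)) i| < ρ := by
  let b := Pi.basisFun ℝ ι
  let s : Set (ι → ℝ) := {x | ∀ i, |(M *ᵥ x) i| < ρ}
  have hsymm : ∀ x ∈ s, -x ∈ s := fun x hx i => by simpa [mulVec_neg] using hx i
  have hconvex : Convex ℝ s := by
    have : s = toLin' M ⁻¹' Metric.ball 0 ρ := by
      ext x
      simp [s, pi_norm_lt_iff hρ]
    exact this ▸ (convex_ball _ _).linear_preimage _
  have hfund : volume (ZSpan.fundamentalDomain b) = 1 := by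
    rw [ZSpan.fundamentalDomain_pi_basisFun, Real.volume_pi_Ico]
    simp
  have hlt : volume (ZSpan.fundamentalDomain b) * 2 ^ Module.finrank ℝ (ι → ℝ) < volume s := by
    rw [hfund, one_mul, Module.finrank_fintype_fun_eq_card, volume_setOf_abs_mulVec_lt h0,
      ← ENNReal.ofReal_ofNat, ← ENNReal.ofReal_pow zero_le_two,
      ← ENNReal.ofReal_pow (by positivity), ← ENNReal.ofReal_mul (abs_nonneg _), abs_inv,
      mul_pow, mul_left_comm]
    refine (ENNReal.ofReal_lt_ofReal_iff (by positivity)).2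
      (lt_mul_of_one_lt_right (by positivity) ?_)
    rwa [← div_eq_inv_mul, one_lt_div (abs_pos.2 h0)]
  have : Countable (Submodule.span ℤ (Set.range b)).toAddSubgroup :=
    inferInstanceAs (Countable (Submodule.span ℤ (Set.range b)))
  obtain ⟨x, hx0, hx⟩ := exists_ne_zero_mem_lattice_of_measure_mul_two_pow_lt_measure
    (ZSpan.isAddFundamentalDomain' b volume) hsymm hconvex hlt
  choose m hm using (b.mem_span_iff_repr_mem ℤ (x : ι → ℝ)).1 x.2
  have hmx : (fun j => (m j : ℝ)) = (x : ι → ℝ) := funext fun j => by simpa [b] using hm j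
  refine ⟨m, ?_, hmx ▸ hx⟩
  rintro rfl
  exact hx0 (Subtype.ext (by rw [← hmx]; ext; simp))

end IntegerVectors

section Bordered

variable {R S : Type*} [CommRing R] [CommRing S] {k : ℕ}

/-- The block matrix with rows `(1, q)` and `(0, u)`: right multiplication by it fixes the first
column and acts by `u` on Schur complements with respect to that column. -/
def bordered (q : Fin k → R) (u : Matrix (Fin k) (Fin k) R) :
    Matrix (Fin (k + 1)) (Fin (k + 1)) R :=
  of (Fin.cons (Fin.cons 1 q) fun i => Fin.cons 0 (u i))

variable (q : Fin k → R) (u : Matrix (Fin k) (Fin k) R)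

theorem det_bordered : (bordered q u).det = u.det := by
  rw [det_succ_column_zero, Fin.sum_univ_succ, Finset.sum_eq_zero fun i _ => by simp [bordered]]
  simp only [bordered, Fin.val_zero, pow_zero, of_apply, Fin.cons_zero, one_mul, add_zero]
  rfl

theorem map_bordered (f : R →+* S) : (bordered q u).map f = bordered (f ∘ q) (u.map f) := by
  ext i j
  refine Fin.cases ?_ (fun i => ?_) i <;> refine Fin.cases ?_ (fun j => ?_) j <;> simp [bordered]

theorem mul_bordered_apply_zero {m : Type*} (N : Matrix m (Fin (k + 1)) R) (i : m) :
    (N * bordered q u) i 0 = N i 0 := by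
  simp [mul_apply, bordered, Fin.sum_univ_succ]

theorem mul_bordered_apply_succ {m : Type*} (N : Matrix m (Fin (k + 1)) R) (i : m) (j : Fin k) :
    (N * bordered q u) i j.succ = N i 0 * q j + ∑ l : Fin k, N i l.succ * u l j := by
  simp [mul_apply, bordered, Fin.sum_univ_succ]

variable {p : Fin (k + 1)}

theorem pivotSchur_mul_bordered {K : Type*} [Field K] {N : Matrix (Fin (k + 1)) (Fin (k + 1)) K}
    (hp : N p 0 ≠ 0) (q : Fin k → K) (u : Matrix (Fin k) (Fin k) K) :
    pivotSchur p (N * bordered q u) = pivotSchur p N * u := by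
  ext i j
  simp only [pivotSchur, of_apply, mul_apply (N := u), mul_bordered_apply_zero,
    mul_bordered_apply_succ, sub_mul, Finset.sum_sub_distrib]
  rw [add_div, mul_div_cancel_left₀ _ hp, mul_add, Finset.sum_div, Finset.mul_sum,
    add_sub_add_left_eq_sub]
  congr 1
  exact Finset.sum_congr rfl fun l _ => by ring

theorem pivotCore_mul_bordered {N : Matrix (Fin (k + 1)) (Fin (k + 1)) ℝ}
    (hp : N p 0 ≠ 0) (q : Fin k → ℝ) (u : Matrix (Fin k) (Fin k) ℝ) :
    pivotCore p (N * bordered q u) = pivotCore p N * u := by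
  rw [pivotCore, mul_bordered_apply_zero, pivotSchur_mul_bordered hp, pivotCore, smul_mul]

end Bordered

section ReductionDomain

variable {k : ℕ}

/-- A set playing the role of a Siegel domain for the action of `SL(k, ℤ)` by right multiplication:
it has finite volume, is star-shaped about `0`, and meets the orbit of every matrix whose
determinant lies in `[-1, 1] \ {0}`. -/
structure IsReductionDomain (F : Set (Matrix (Fin k) (Fin k) ℝ)) : Prop where
  measurableSet : MeasurableSet F
  volume_ne_top : volume F ≠ ∞
  smul_mem : ∀ t ∈ Set.Ioc (0 : ℝ) 1, ∀ M ∈ F, t • M ∈ F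
  exists_mul_mem : ∀ M : Matrix (Fin k) (Fin k) ℝ, M.det ≠ 0 → |M.det| ≤ 1 →
    ∃ γ : Matrix.SpecialLinearGroup (Fin k) ℤ, M * (γ : SLR k).1 ∈ F

/-- The matrices whose first column has entries in `(-ρ, ρ)`, and for which, with respect to some
pivot in that column, the pivot row is reduced modulo the pivot and the rescaled Schur complement
lies in `F`. -/
def cuspSet (ρ : ℝ) (F : Set (Matrix (Fin k) (Fin k) ℝ)) :
    Set (Matrix (Fin (k + 1)) (Fin (k + 1)) ℝ) :=
  ⋃ p, {M | M p 0 ≠ 0} ∩ pivotCoords p ⁻¹'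
    ((Set.pi Set.univ fun _ => Set.Ioo (-ρ) ρ) ×ˢ (Set.pi Set.univ fun _ => Set.Ico 0 1) ×ˢ F)

variable {ρ : ℝ} {F : Set (Matrix (Fin k) (Fin k) ℝ)}

theorem mem_cuspSet {M : Matrix (Fin (k + 1)) (Fin (k + 1)) ℝ} :
    M ∈ cuspSet ρ F ↔ ∃ p, M p 0 ≠ 0 ∧ (∀ i, |M i 0| < ρ) ∧
      (∀ j : Fin k, M p j.succ / M p 0 ∈ Set.Ico 0 1) ∧ pivotCore p M ∈ F := by
  simp [cuspSet, pivotCoords, abs_lt]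

theorem measurableSet_cuspSet (hF : MeasurableSet F) : MeasurableSet (cuspSet ρ F) := by
  refine MeasurableSet.iUnion fun p => ?_
  refine (measurable_matrix_apply p 0 (measurableSet_singleton 0).compl).inter ?_
  refine (measurePreserving_pivotCoords p).measurable ?_
  exact (MeasurableSet.univ_pi fun _ => measurableSet_Ioo).prod
    ((MeasurableSet.univ_pi fun _ => measurableSet_Ico).prod hF)

theorem volume_cuspSet_le (ρ : ℝ) (hF : MeasurableSet F) :
    volume (cuspSet ρ F) ≤ (k + 1) * (ENNReal.ofReal (2 * ρ) ^ (k + 1) * volume F) := by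
  have hbox := (MeasurableSet.univ_pi fun _ : Fin (k + 1) =>
    measurableSet_Ioo (a := -ρ) (b := ρ)).prod
    ((MeasurableSet.univ_pi fun _ : Fin k => measurableSet_Ico (a := (0 : ℝ)) (b := 1)).prod hF)
  have hpivot (p : Fin (k + 1)) :
      volume ({M : Matrix (Fin (k + 1)) (Fin (k + 1)) ℝ | M p 0 ≠ 0} ∩ pivotCoords p ⁻¹'
        ((Set.pi Set.univ fun _ => Set.Ioo (-ρ) ρ) ×ˢ
          (Set.pi Set.univ fun _ => Set.Ico 0 1) ×ˢ F)) ≤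
        ENNReal.ofReal (2 * ρ) ^ (k + 1) * volume F := by
    refine (measure_mono Set.inter_subset_right).trans ?_
    rw [(measurePreserving_pivotCoords p).measure_preimage hbox.nullMeasurableSet,
      Measure.volume_eq_prod, Measure.prod_prod, Measure.volume_eq_prod, Measure.prod_prod,
      Real.volume_pi_Ioo, Real.volume_pi_Ico]
    simp [two_mul]
  refine (measure_iUnion_le _).trans ((ENNReal.tsum_le_tsum hpivot).trans_eq ?_)
  simp

theorem smul_mem_cuspSet (hF : ∀ t ∈ Set.Ioc (0 : ℝ) 1, ∀ M ∈ F, t • M ∈ F)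
    {t : ℝ} (ht : t ∈ Set.Ioc 0 1) {M : Matrix (Fin (k + 1)) (Fin (k + 1)) ℝ}
    (hM : M ∈ cuspSet ρ F) : t • M ∈ cuspSet ρ F := by
  obtain ⟨p, hp, hcol, hrow, hcore⟩ := mem_cuspSet.1 hM
  refine mem_cuspSet.2 ⟨p, mul_ne_zero ht.1.ne' hp, fun i => ?_, fun j => ?_, ?_⟩
  · calc |t * M i 0| = t * |M i 0| := by rw [abs_mul, abs_of_pos ht.1]
      _ ≤ |M i 0| := mul_le_of_le_one_left (abs_nonneg _) ht.2
      _ < ρ := hcol i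
  · change t * M p j.succ / (t * M p 0) ∈ _
    rw [mul_div_mul_left _ _ ht.1.ne']
    exact hrow j
  · rw [pivotCore_smul p ht.1]
    have hroot : t ^ (k : ℝ)⁻¹ ≤ 1 := Real.rpow_le_one ht.1.le ht.2 (by positivity)
    exact hF _ ⟨mul_pos (Real.rpow_pos_of_pos ht.1 _) ht.1,
      mul_le_one₀ hroot ht.1.le ht.2⟩ _ hcore

theorem exists_mul_column_lt {M : Matrix (Fin (k + 1)) (Fin (k + 1)) ℝ} {m : Fin (k + 1) → ℤ}
    (hm : m ≠ 0) (hM : ∀ i, |(M *ᵥ fun j => (m j : ℝ)) i| < ρ) :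
    ∃ γ : Matrix.SpecialLinearGroup (Fin (k + 1)) ℤ, ∀ i, |(M * (γ : SLR (k + 1)).1) i 0| < ρ := by
  obtain ⟨γ, c, hγ⟩ := exists_specialLinearGroup_mulVec_single 0 m
  have hc : (1 : ℝ) ≤ |(c : ℝ)| := by
    have hc0 : c ≠ 0 := by
      rintro rfl
      exact hm (by simpa using hγ.symm)
    exact_mod_cast Int.one_le_abs hc0
  have hcol (i : Fin (k + 1)) :
      (M *ᵥ fun j => (m j : ℝ)) i = (M * (γ : SLR (k + 1)).1) i 0 * c := by
    have hcast : (fun j => (m j : ℝ)) = (γ : SLR (k + 1)).1 *ᵥ Pi.single 0 (c : ℝ) := by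
      ext j
      simp [← hγ, mul_comm]
    rw [hcast, mulVec_mulVec, mulVec_single]
    rfl
  refine ⟨γ, fun i => lt_of_le_of_lt ?_ (hM i)⟩
  rw [hcol, abs_mul]
  exact le_mul_of_one_le_right (abs_nonneg _) hc

theorem exists_mul_mem_cuspSet_of_pivotCore {N : Matrix (Fin (k + 1)) (Fin (k + 1)) ℝ}
    {p : Fin (k + 1)} (hp : N p 0 ≠ 0) (hcol : ∀ i, |N i 0| < ρ)
    {u : Matrix.SpecialLinearGroup (Fin k) ℤ} (hu : pivotCore p N * (u : SLR k).1 ∈ F) :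
    ∃ δ : Matrix.SpecialLinearGroup (Fin (k + 1)) ℤ, N * (δ : SLR (k + 1)).1 ∈ cuspSet ρ F := by
  let x (j : Fin k) : ℝ := (∑ l : Fin k, N p l.succ * (u : SLR k) l j) / N p 0
  let q (j : Fin k) : ℤ := -⌊x j⌋
  let δ : Matrix.SpecialLinearGroup (Fin (k + 1)) ℤ := ⟨bordered q u, by rw [det_bordered, u.2]⟩
  have hδ : (δ : SLR (k + 1)).1 = bordered (fun j => (q j : ℝ)) (u : SLR k).1 :=
    map_bordered q _ (Int.castRingHom ℝ)
  refine ⟨δ, mem_cuspSet.2 ⟨p, ?_, fun i => ?_, fun j => ?_, ?_⟩⟩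
  · rwa [hδ, mul_bordered_apply_zero]
  · rw [hδ, mul_bordered_apply_zero]
    exact hcol i
  · have hrow : (N * (δ : SLR (k + 1)).1) p j.succ / N p 0 = Int.fract (x j) := by
      rw [hδ, mul_bordered_apply_succ, add_div, mul_div_cancel_left₀ _ hp]
      simp only [q, Int.cast_neg, Int.fract, x]
      ring
    rw [hδ, mul_bordered_apply_zero, ← hδ, hrow]
    exact ⟨Int.fract_nonneg _, Int.fract_lt_one _⟩
  · rwa [hδ, pivotCore_mul_bordered hp]

theorem IsReductionDomain.exists_mul_mem_cuspSet (hF : IsReductionDomain F)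
    {M : Matrix (Fin (k + 1)) (Fin (k + 1)) ℝ} (h0 : M.det ≠ 0) (h1 : |M.det| ≤ 1)
    {m : Fin (k + 1) → ℤ} (hm : m ≠ 0) (hM : ∀ i, |(M *ᵥ fun j => (m j : ℝ)) i| < ρ) :
    ∃ γ : Matrix.SpecialLinearGroup (Fin (k + 1)) ℤ, M * (γ : SLR (k + 1)).1 ∈ cuspSet ρ F := by
  obtain ⟨γ, hcol⟩ := exists_mul_column_lt hm hM
  set N : Matrix (Fin (k + 1)) (Fin (k + 1)) ℝ := M * (γ : SLR (k + 1)).1 with hN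
  have hdet : N.det = M.det := by rw [hN, det_mul, Matrix.SpecialLinearGroup.det_coe, mul_one]
  obtain ⟨p, hp⟩ : ∃ p, N p 0 ≠ 0 := by
    by_contra! hzero
    exact h0 (hdet ▸ det_eq_zero_of_column_eq_zero 0 hzero)
  have hcore : |(pivotCore p N).det| ≠ 0 ∧ |(pivotCore p N).det| ≤ 1 := by
    rcases eq_or_ne k 0 with rfl | hk
    · simp
    · rw [abs_det_pivotCore hk hp, hdet]
      exact ⟨abs_ne_zero.2 h0, h1⟩
  obtain ⟨u, hu⟩ := hF.exists_mul_mem _ (abs_ne_zero.1 hcore.1) hcore.2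
  obtain ⟨δ, hδ⟩ := exists_mul_mem_cuspSet_of_pivotCore hp hcol hu
  exact ⟨γ * δ, by rwa [map_mul, Matrix.SpecialLinearGroup.coe_mul, ← Matrix.mul_assoc]⟩

theorem IsReductionDomain.cuspSet_two (hF : IsReductionDomain F) :
    IsReductionDomain (cuspSet 2 F) where
  measurableSet := measurableSet_cuspSet hF.measurableSet
  volume_ne_top := ne_top_of_le_ne_top (by finiteness [hF.volume_ne_top])
    (volume_cuspSet_le 2 hF.measurableSet)
  smul_mem _ ht _ hM := smul_mem_cuspSet hF.smul_mem ht hM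
  exists_mul_mem M h0 h1 := by
    have hlt : |M.det| < 2 ^ Fintype.card (Fin (k + 1)) :=
      h1.trans_lt (one_lt_pow₀ _root_.one_lt_two Fintype.card_ne_zero)
    obtain ⟨m, hm, hMm⟩ := exists_int_abs_mulVec_lt h0 two_pos hlt
    exact hF.exists_mul_mem_cuspSet h0 h1 hm hMm

theorem exists_isReductionDomain (k : ℕ) :
    ∃ F : Set (Matrix (Fin k) (Fin k) ℝ), IsReductionDomain F := by
  induction k with
  | zero =>
    refine ⟨Set.univ, MeasurableSet.univ, ?_, fun _ _ _ _ => trivial, fun _ _ _ => ⟨1, trivial⟩⟩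
    exact Set.subsingleton_univ.isCompact.measure_ne_top
  | succ k ih =>
    obtain ⟨F, hF⟩ := ih
    exact ⟨cuspSet 2 F, hF.cuspSet_two⟩

end ReductionDomain

section Unfolding

variable {G : Type*} [Group G] {Γ : Subgroup G}

section Discrete

variable [TopologicalSpace G] [IsTopologicalGroup G] [DiscreteTopology Γ]

instance [T2Space G] : T1Space (G ⧸ Γ) :=
  QuotientGroup.t1Space_iff.2 Subgroup.isClosed_of_discrete

theorem exists_isOpen_injOn_mk (g : G) :
    ∃ U : Set G, IsOpen U ∧ g ∈ U ∧ Set.InjOn ((↑) : G → G ⧸ Γ) U := by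
  obtain ⟨V, hV, hVΓ⟩ := nhds_inter_eq_singleton_of_mem_discrete
    (isDiscrete_iff_discreteTopology.2 ‹DiscreteTopology Γ›) (one_mem Γ)
  have hdiv : ∀ᶠ z : G × G in nhds (g, g), z.1⁻¹ * z.2 ∈ V := by
    have : ContinuousAt (fun z : G × G => z.1⁻¹ * z.2) (g, g) := by fun_prop
    exact this.eventually_mem (by simpa using hV)
  obtain ⟨U₁, U₂, hU₁, hg₁, hU₂, hg₂, hU⟩ := mem_nhds_prod_iff'.1 hdiv
  refine ⟨U₁ ∩ U₂, hU₁.inter hU₂, ⟨hg₁, hg₂⟩, fun a ha b hb hab => ?_⟩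
  have hmem : a⁻¹ * b ∈ V ∩ Γ := ⟨hU (Set.mk_mem_prod ha.1 hb.2), QuotientGroup.eq.1 hab⟩
  rw [hVΓ] at hmem
  exact inv_mul_eq_one.1 hmem

end Discrete

variable [MeasurableSpace G]

/-- Counting measure on the coset `x`, as a measure on the whole group. -/
def cosetCount (x : G ⧸ Γ) : Measure G :=
  Measure.count.restrict ((↑) ⁻¹' {x})

variable [MeasurableSpace (G ⧸ Γ)]

/-- The measure on `G` that lifts a measure on `G ⧸ Γ` by giving mass one to every point of every
coset. -/
def cosetLift (μ : Measure (G ⧸ Γ)) : Measure G :=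
  μ.bind cosetCount

variable [TopologicalSpace G] [BorelSpace G] [BorelSpace (G ⧸ Γ)] {A : Set G}

theorem cosetCount_apply [T1Space (G ⧸ Γ)] (hA : MeasurableSet A) (x : G ⧸ Γ) :
    cosetCount x A = (A ∩ (↑) ⁻¹' {x}).encard := by
  have hx : MeasurableSet ((↑) ⁻¹' {x} : Set G) :=
    QuotientGroup.continuous_mk.measurable (measurableSet_singleton x)
  rw [cosetCount, Measure.restrict_apply hA, Measure.count_apply (hA.inter hx)]

variable [IsTopologicalGroup G]

theorem cosetCount_mk [T1Space (G ⧸ Γ)] (h : G) : cosetCount (h : G ⧸ Γ) =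
    (Measure.count : Measure Γ).map (fun γ : Γ => h * (γ : G)) := by
  have hmul : Measurable fun γ : Γ => h * (γ : G) := measurable_subtype_coe.const_mul h
  have hinj : Function.Injective fun γ : Γ => h * (γ : G) :=
    (mul_right_injective h).comp Subtype.val_injective
  have hrange : Set.range (fun γ : Γ => h * (γ : G)) = (↑) ⁻¹' {(h : G ⧸ Γ)} := by
    ext g
    rw [Set.mem_preimage, Set.mem_singleton_iff, eq_comm, QuotientGroup.eq]
    exact ⟨by rintro ⟨γ, rfl⟩; simp, fun hg => ⟨⟨_, hg⟩, mul_inv_cancel_left h g⟩⟩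
  ext A hA
  rw [cosetCount_apply hA, Measure.map_apply hmul hA, Measure.count_apply (hmul hA),
    ← hinj.encard_image, Set.image_preimage_eq_inter_range, hrange]

theorem cosetCount_smul [T1Space (G ⧸ Γ)] (g : G) (x : G ⧸ Γ) :
    cosetCount (g • x) = (cosetCount x).map (g * ·) := by
  obtain ⟨h, rfl⟩ := QuotientGroup.mk_surjective x
  rw [cosetCount_mk, Measure.map_map (measurable_const_mul g)
    (measurable_subtype_coe.const_mul h)]
  rw [MulAction.Quotient.smul_mk, cosetCount_mk]
  simp only [Function.comp_def, smul_eq_mul, mul_assoc]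

variable [PolishSpace G] [DiscreteTopology Γ]

theorem measurable_cosetCount : Measurable (cosetCount : G ⧸ Γ → Measure G) := by
  have : Countable Γ := TopologicalSpace.separableSpace_iff_countable.1 inferInstance
  refine Measure.measurable_of_measurable_coe _ fun A hA => ?_
  rw [← QuotientGroup.continuous_mk.measurable.measurable_comp_iff_of_surjective
    QuotientGroup.mk_surjective]
  have hmul : Measurable fun z : G × Γ => z.1 * (z.2 : G) :=
    measurable_fst.mul (measurable_subtype_coe.comp measurable_snd)
  have hcomp : (fun x : G ⧸ Γ => cosetCount x A) ∘ QuotientGroup.mk =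
      fun h : G => (Measure.count : Measure Γ)
        (Prod.mk h ⁻¹' ((fun z => z.1 * (z.2 : G)) ⁻¹' A)) := by
    ext h
    rw [Function.comp_apply, cosetCount_mk,
      Measure.map_apply (measurable_subtype_coe.const_mul h) hA]
    rfl
  exact hcomp ▸ measurable_measure_prodMk_left (hmul hA)

variable (μ : Measure (G ⧸ Γ))

theorem cosetLift_apply (hA : MeasurableSet A) : cosetLift μ A = ∫⁻ x, cosetCount x A ∂μ :=
  Measure.bind_apply hA measurable_cosetCount.aemeasurable

instance [SMulInvariantMeasure G (G ⧸ Γ) μ] : (cosetLift μ).IsMulLeftInvariant where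
  map_mul_left_eq_self g := by
    have hg : Measurable fun h : G => g * h := measurable_const_mul g
    ext A hA
    have hmeas : Measurable fun x : G ⧸ Γ => cosetCount x A :=
      (Measure.measurable_coe hA).comp measurable_cosetCount
    have hsmul (x : G ⧸ Γ) : cosetCount x ((g * ·) ⁻¹' A) = cosetCount (g • x) A := by
      rw [cosetCount_smul, Measure.map_apply hg hA]
    rw [Measure.map_apply hg hA, cosetLift_apply μ (hg hA), cosetLift_apply μ hA]
    simp only [hsmul]
    exact (measurePreserving_smul g μ).lintegral_comp hmeas

theorem measure_le_cosetLift (hA : MeasurableSet A) {E : Set (G ⧸ Γ)} (hE : E ⊆ (↑) '' A) :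
    μ E ≤ cosetLift μ A := by
  have hone : E ⊆ {x | 1 ≤ cosetCount x A} := fun x hx => by
    obtain ⟨g, hg, rfl⟩ := hE hx
    rw [Set.mem_ofPred_eq, cosetCount_apply hA]
    have : (A ∩ (↑) ⁻¹' {(g : G ⧸ Γ)}).Nonempty := ⟨g, hg, rfl⟩
    exact_mod_cast Set.one_le_encard_iff_nonempty.2 this
  calc μ E ≤ 1 * μ {x | 1 ≤ cosetCount x A} := (measure_mono hone).trans_eq (one_mul _).symm
    _ ≤ ∫⁻ x, cosetCount x A ∂μ := mul_meas_ge_le_lintegral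
      ((Measure.measurable_coe hA).comp measurable_cosetCount) 1
    _ = cosetLift μ A := (cosetLift_apply μ hA).symm

theorem cosetLift_le_measure_univ (hA : MeasurableSet A)
    (hinj : Set.InjOn ((↑) : G → G ⧸ Γ) A) : cosetLift μ A ≤ μ Set.univ := by
  have hone (x : G ⧸ Γ) : cosetCount x A ≤ 1 := by
    rw [cosetCount_apply hA]
    have : (A ∩ (↑) ⁻¹' {x}).encard ≤ 1 := Set.encard_le_one_iff.2
      fun a b ha hb => hinj ha.1 hb.1 (ha.2.trans hb.2.symm)
    exact_mod_cast this
  calc cosetLift μ A = ∫⁻ x, cosetCount x A ∂μ := cosetLift_apply μ hA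
    _ ≤ ∫⁻ _, 1 ∂μ := lintegral_mono hone
    _ = μ Set.univ := lintegral_one

instance [IsFiniteMeasure μ] : IsLocallyFiniteMeasure (cosetLift μ) where
  finiteAtNhds g := by
    obtain ⟨U, hU, hg, hinj⟩ := exists_isOpen_injOn_mk (Γ := Γ) g
    exact ⟨U, hU.mem_nhds hg,
      (cosetLift_le_measure_univ μ hU.measurableSet hinj).trans_lt (measure_lt_top μ _)⟩

theorem exists_measure_le_mul_haar [LocallyCompactSpace G] [IsFiniteMeasure μ]
    [SMulInvariantMeasure G (G ⧸ Γ) μ] (m : Measure G) [m.IsHaarMeasure] :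
    ∃ C : NNReal, ∀ A : Set G, MeasurableSet A → ∀ E : Set (G ⧸ Γ), E ⊆ (↑) '' A →
      μ E ≤ C * m A := by
  refine ⟨(cosetLift μ).haarScalarFactor m, fun A hA E hE => ?_⟩
  refine (measure_le_cosetLift μ hA hE).trans_eq ?_
  conv_lhs => rw [Measure.isMulLeftInvariant_eq_smul (cosetLift μ) m]
  rfl

end Unfolding

section SpecialLinear

variable {n : ℕ}

instance : IsTopologicalGroup (SLR n) :=
  Matrix.SpecialLinearGroup.topologicalGroup

theorem isClosedEmbedding_SLR_val :
    Topology.IsClosedEmbedding fun g : SLR n => (g : Matrix (Fin n) (Fin n) ℝ) :=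
  Matrix.SpecialLinearGroup.isClosedEmbedding_val

instance : PolishSpace (SLR n) :=
  isClosedEmbedding_SLR_val.polishSpace

instance : LocallyCompactSpace (SLR n) :=
  isClosedEmbedding_SLR_val.locallyCompactSpace

instance : MeasurableSpace (SLR n) := borel _

instance : BorelSpace (SLR n) := ⟨rfl⟩

instance : BorelSpace (LatticeSpace n) := ⟨rfl⟩

instance : DiscreteTopology (latticeGamma n) :=
  Matrix.SpecialLinearGroup.discreteSpecialLinearGroupIntRangeSL

theorem measurable_matrix_det : Measurable (det : Matrix (Fin n) (Fin n) ℝ → ℝ) :=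
  continuous_id.matrix_det.measurable

/-- The scaling factor `det M ^ (1/n)` between `M` and its normalization in `SL(n, ℝ)`. -/
def detRoot (M : Matrix (Fin n) (Fin n) ℝ) : ℝ :=
  M.det ^ (n : ℝ)⁻¹

variable {M : Matrix (Fin n) (Fin n) ℝ}

theorem detRoot_pos (hM : 0 < M.det) : 0 < detRoot M :=
  Real.rpow_pos_of_pos hM _

theorem detRoot_mem_Ioc (hM : M.det ∈ Set.Ioc 0 1) : detRoot M ∈ Set.Ioc 0 1 :=
  ⟨detRoot_pos hM.1, Real.rpow_le_one hM.1.le hM.2 (by positivity)⟩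

variable [NeZero n]

theorem det_inv_detRoot_smul (hM : 0 < M.det) : ((detRoot M)⁻¹ • M).det = 1 := by
  rw [det_smul, Fintype.card_fin, inv_pow, detRoot,
    Real.rpow_inv_natCast_pow hM.le (NeZero.ne n), inv_mul_cancel₀ hM.ne']

/-- The rescaling of a matrix of positive determinant to determinant one; the junk value at the
other matrices is `1`. -/
def normalizeDet (M : Matrix (Fin n) (Fin n) ℝ) : SLR n :=
  if hM : 0 < M.det then ⟨(detRoot M)⁻¹ • M, det_inv_detRoot_smul hM⟩ else 1

theorem coe_normalizeDet (hM : 0 < M.det) : (normalizeDet M).1 = (detRoot M)⁻¹ • M :=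
  congrArg Subtype.val (dif_pos hM)

theorem detRoot_smul_normalizeDet (hM : 0 < M.det) : detRoot M • (normalizeDet M).1 = M := by
  rw [coe_normalizeDet hM, smul_inv_smul₀ (detRoot_pos hM).ne']

theorem normalizeDet_mul (g : SLR n) (hM : 0 < M.det) :
    normalizeDet (g.1 * M) = g * normalizeDet M := by
  have hdet : (g.1 * M).det = M.det := by rw [det_mul, g.2, one_mul]
  refine Subtype.ext ?_
  rw [coe_normalizeDet (hdet ▸ hM), Matrix.SpecialLinearGroup.coe_mul, coe_normalizeDet hM,
    Matrix.mul_smul, detRoot, hdet, detRoot]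

theorem measurable_normalizeDet :
    Measurable (normalizeDet : Matrix (Fin n) (Fin n) ℝ → SLR n) := by
  have hcomp : (fun g : SLR n => g.1) ∘ normalizeDet =
      fun M : Matrix (Fin n) (Fin n) ℝ => if 0 < M.det then (detRoot M)⁻¹ • M else 1 := by
    ext1 M
    split_ifs with hM
    · exact coe_normalizeDet hM
    · exact congrArg Subtype.val (dif_neg hM)
  rw [← isClosedEmbedding_SLR_val.measurableEmbedding.measurable_comp_iff, hcomp]
  have hroot : Measurable (detRoot : Matrix (Fin n) (Fin n) ℝ → ℝ) :=
    measurable_matrix_det.pow_const _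
  refine Measurable.ite (measurable_matrix_det measurableSet_Ioi) ?_ measurable_const
  exact measurable_matrix_iff.2 fun i j => hroot.inv.mul (measurable_matrix_apply i j)

/-- The measure on `SL(n, ℝ)` that assigns to a set the volume of the truncated cone over it. -/
def coneMeasure (n : ℕ) [NeZero n] : Measure (SLR n) :=
  (volume.restrict {M : Matrix (Fin n) (Fin n) ℝ | M.det ∈ Set.Ioc 0 1}).map normalizeDet

instance : (coneMeasure n).IsMulLeftInvariant where
  map_mul_left_eq_self g := by
    let S : Set (Matrix (Fin n) (Fin n) ℝ) := {M | M.det ∈ Set.Ioc 0 1}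
    have hS : MeasurableSet S := measurable_matrix_det measurableSet_Ioc
    have hpre : (fun M => g.1 * M) ⁻¹' S = S := by
      ext M
      simp [S]
    have hmul : MeasurePreserving (fun M => g.1 * M) (volume.restrict S) (volume.restrict S) := by
      have := (measurePreserving_matrix_mul_left (n := Fin n) g.2).restrict_preimage hS
      rwa [hpre] at this
    have hcomm : (fun M => g * normalizeDet M) =ᵐ[volume.restrict S]
        normalizeDet ∘ fun M => g.1 * M := by
      filter_upwards [ae_restrict_mem hS] with M hM
      exact (normalizeDet_mul g hM.1).symm
    calc (coneMeasure n).map (g * ·) = (volume.restrict S).map fun M => g * normalizeDet M :=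
          Measure.map_map (measurable_const_mul g) measurable_normalizeDet
      _ = (volume.restrict S).map (normalizeDet ∘ fun M => g.1 * M) := Measure.map_congr hcomm
      _ = ((volume.restrict S).map fun M => g.1 * M).map normalizeDet :=
          (Measure.map_map measurable_normalizeDet hmul.measurable).symm
      _ = coneMeasure n := by rw [hmul.map_eq]; rfl

theorem coneMeasure_le {s : Set (SLR n)} (hs : MeasurableSet s)
    {Q : Set (Matrix (Fin n) (Fin n) ℝ)} (hQ : ∀ g ∈ s, ∀ t ∈ Set.Ioc (0 : ℝ) 1, t • g.1 ∈ Q) :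
    coneMeasure n s ≤ volume Q := by
  rw [coneMeasure, Measure.map_apply measurable_normalizeDet hs,
    Measure.restrict_apply (measurable_normalizeDet hs)]
  refine measure_mono fun M ⟨hMs, hM⟩ => ?_
  rw [← detRoot_smul_normalizeDet hM.1]
  exact hQ _ hMs _ (detRoot_mem_Ioc hM)

instance : IsFiniteMeasureOnCompacts (coneMeasure n) where
  lt_top_of_isCompact K hK := by
    have hcont : Continuous fun z : ℝ × SLR n => z.1 • z.2.1 :=
      continuous_fst.smul (isClosedEmbedding_SLR_val.continuous.comp continuous_snd)
    have hQ : IsCompact ((fun z : ℝ × SLR n => z.1 • z.2.1) '' Set.Icc 0 1 ×ˢ K) :=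
      (isCompact_Icc.prod hK).image hcont
    refine (coneMeasure_le hK.measurableSet fun g hg t ht => ?_).trans_lt hQ.measure_lt_top
    exact Set.mem_image_of_mem _ (Set.mk_mem_prod (Set.Ioc_subset_Icc_self ht) hg)

instance : NeZero (coneMeasure n) where
  out := by
    have hopen : IsOpen {M : Matrix (Fin n) (Fin n) ℝ | M.det ∈ Set.Ioo 0 1} :=
      isOpen_Ioo.preimage continuous_id.matrix_det
    have hhalf : ((2⁻¹ : ℝ) • (1 : Matrix (Fin n) (Fin n) ℝ)).det ∈ Set.Ioo 0 1 := by
      rw [det_smul, det_one, mul_one, Fintype.card_fin]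
      exact ⟨by positivity, pow_lt_one₀ (by norm_num) (by norm_num) (NeZero.ne n)⟩
    have hpos : 0 < volume {M : Matrix (Fin n) (Fin n) ℝ | M.det ∈ Set.Ioc 0 1} :=
      (hopen.measure_pos volume ⟨_, hhalf⟩).trans_le
        (measure_mono fun _ hM => Set.Ioo_subset_Ioc_self hM)
    rw [coneMeasure, Ne, Measure.map_eq_zero_iff measurable_normalizeDet.aemeasurable,
      Measure.restrict_eq_zero]
    exact hpos.ne'

instance : (coneMeasure n).IsHaarMeasure where
  toIsOpenPosMeasure := isOpenPosMeasure_of_mulLeftInvariant_of_regular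

end SpecialLinear

section CuspExcursion

theorem abs_apply_le_eNorm {n : ℕ} (v : Fin n → ℝ) (i : Fin n) : |v i| ≤ eNorm v :=
  PiLp.norm_apply_le ((WithLp.equiv 2 (Fin n → ℝ)).symm v) i

variable {k : ℕ} {F : Set (Matrix (Fin k) (Fin k) ℝ)}

theorem IsReductionDomain.setOf_intersects_subset (hF : IsReductionDomain F) (ρ : ℝ) :
    {Λ : LatticeSpace (k + 1) | Intersects (k + 1) Λ {x | eNorm x < ρ}} ⊆
      (↑) '' {g : SLR (k + 1) | g.1 ∈ cuspSet ρ F} := by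
  intro Λ hΛ
  obtain ⟨g, rfl⟩ := QuotientGroup.mk_surjective Λ
  obtain ⟨m, hm, hlt⟩ := hΛ g rfl
  obtain ⟨γ, hγ⟩ := hF.exists_mul_mem_cuspSet (by simp) (by simp) hm
    fun i => (abs_apply_le_eNorm _ i).trans_lt hlt
  exact ⟨g * γ, hγ, QuotientGroup.mk_mul_of_mem g ⟨γ, rfl⟩⟩

theorem IsReductionDomain.measurableSet_coe_preimage_cuspSet (hF : IsReductionDomain F) (ρ : ℝ) :
    MeasurableSet {g : SLR (k + 1) | g.1 ∈ cuspSet ρ F} :=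
  isClosedEmbedding_SLR_val.continuous.measurable (measurableSet_cuspSet hF.measurableSet)

theorem IsReductionDomain.coneMeasure_coe_preimage_cuspSet_le (hF : IsReductionDomain F) (ρ : ℝ) :
    coneMeasure (k + 1) {g | g.1 ∈ cuspSet ρ F} ≤
      (k + 1) * (ENNReal.ofReal (2 * ρ) ^ (k + 1) * volume F) :=
  (coneMeasure_le (hF.measurableSet_coe_preimage_cuspSet ρ)
    fun _ hg _ ht => smul_mem_cuspSet hF.smul_mem ht hg).trans
    (volume_cuspSet_le ρ hF.measurableSet)

theorem exists_measure_intersects_ball_le (μ : Measure (LatticeSpace (k + 1))) [IsFiniteMeasure μ]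
    [SMulInvariantMeasure (SLR (k + 1)) (LatticeSpace (k + 1)) μ] :
    ∃ C : NNReal, ∀ ρ : ℝ, μ {Λ | Intersects (k + 1) Λ {x | eNorm x < ρ}} ≤
      C * ENNReal.ofReal ρ ^ (k + 1) := by
  obtain ⟨F, hF⟩ := exists_isReductionDomain k
  obtain ⟨C, hC⟩ := exists_measure_le_mul_haar μ (coneMeasure (k + 1))
  refine ⟨C * ((k + 1) * 2 ^ (k + 1) * (volume F).toNNReal), fun ρ => ?_⟩
  calc μ {Λ | Intersects (k + 1) Λ {x | eNorm x < ρ}}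
      ≤ C * coneMeasure (k + 1) {g | g.1 ∈ cuspSet ρ F} :=
        hC _ (hF.measurableSet_coe_preimage_cuspSet ρ) _ (hF.setOf_intersects_subset ρ)
    _ ≤ C * ((k + 1) * (ENNReal.ofReal (2 * ρ) ^ (k + 1) * volume F)) := by
        gcongr
        exact hF.coneMeasure_coe_preimage_cuspSet_le ρ
    _ = ↑(C * ((k + 1) * 2 ^ (k + 1) * (volume F).toNNReal)) * ENNReal.ofReal ρ ^ (k + 1) := by
        rw [ENNReal.ofReal_mul zero_le_two, ENNReal.ofReal_ofNat]
        push_cast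
        rw [ENNReal.coe_toNNReal hF.volume_ne_top]
        ring

end CuspExcursion

/-- There is a constant `D_n` such that for every `r > 0`, the measure of the set of
unimodular lattices containing a nonzero vector of Euclidean norm `< e^{-r}` (i.e. with
`log α₁ > r`) is at most `D_n e^{-nr}`. -/
theorem measure_cusp_excursion_le (n : ℕ) (hn : 2 ≤ n)
    (μ : Measure (LatticeSpace n)) [IsProbabilityMeasure μ]
    (hinv : ∀ (g : SLR n) (s : Set (LatticeSpace n)), μ ((fun x => g • x) ⁻¹' s) = μ s) :
    ∃ D : ℝ, 0 < D ∧ ∀ r : ℝ, 0 < r →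
      μ {Λ : LatticeSpace n | Intersects n Λ {x | eNorm x < Real.exp (-r)}} ≤
        ENNReal.ofReal (D * Real.exp (-(n : ℝ) * r)) := by
  obtain ⟨k, rfl⟩ : ∃ k, n = k + 1 := ⟨n - 1, by lia⟩
  have : SMulInvariantMeasure (SLR (k + 1)) (LatticeSpace (k + 1)) μ := ⟨fun g s _ => hinv g s⟩
  obtain ⟨C, hC⟩ := exists_measure_intersects_ball_le μ
  refine ⟨C + 1, by positivity, fun r _ => (hC (Real.exp (-r))).trans ?_⟩
  have hexp : Real.exp (-r) ^ (k + 1) = Real.exp (-((k + 1 : ℕ) : ℝ) * r) := by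
    rw [← Real.exp_nat_mul]
    ring_nf
  rw [← ENNReal.ofReal_pow (Real.exp_pos _).le, hexp, ← ENNReal.ofReal_coe_nnreal,
    ← ENNReal.ofReal_mul C.coe_nonneg]
  gcongr
  exact le_add_of_nonneg_right zero_le_one
end
end

section
/- (Siegel integral formula) For every bounded, compactly supported measurable function f : ℝⁿ → ℝ, the integral over X_n = SL(n,ℝ)/SL(n,ℤ) (with respect to Haar probability measure μ) of the function Λ ↦ Σ_{0 ≠ v ∈ Λ} f(v) equals the Lebesgue integral ∫_{ℝⁿ} f dm. -/
open MeasureTheory Filter Matrix Real ENNReal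

noncomputable section

/-!
Averaging over `μ` the counting measures of the nonzero vectors of the lattices gives a measure `ν`
on `ℝⁿ`, and the integral of `f` against `ν` is the left-hand side of the formula. So it suffices
that `ν` is Lebesgue measure, and, since `ν {0} = 0`, that the two agree on the double pyramids,
which are boxes in the projective coordinates `(zᵢ, (zₖ / zᵢ)_{k ≠ i})`.

Let `P` be a double pyramid and `q ≥ 1`. The element of `SL(n, ℝ)` that scales `zᵢ` by `q^{-(n-1)}`
and the other coordinates by `q` scales the slopes `zₖ / zᵢ` by `qⁿ`, and a shear translates the
slopes. Cutting each range of slopes into `qⁿ` equal intervals therefore tiles the dilate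
`q^{n-1} P` by `q^{n(n-1)}` preimages of `P` under elements of `SL(n, ℝ)`. Hence the mean of
`Λ ↦ #(Λ ∩ P)` over the translates of `Λ` by these elements is `#(Λ ∩ R P) / Rⁿ` with
`R = q^{n-1}`, which tends to `vol P` as `q → ∞`. By invariance of `μ` taking this mean does not
change the integral, so Fatou's lemma gives `vol P ≤ ν P`. Truncation at a constant makes dominated
convergence applicable, and since the truncated mean dominates the mean of the truncation, it gives
`ν P ≤ vol P`.
-/

section Averaging

variable {X ι : Type*} [Fintype ι]

/-- The mean of `F` over the images of `x` under the finitely many maps `T i`. -/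
def meanAlong (T : ι → X → X) (F : X → ℝ≥0∞) (x : X) : ℝ≥0∞ :=
  (∑ i, F (T i x)) / Fintype.card ι

theorem meanAlong_min_const_le (T : ι → X → X) (F : X → ℝ≥0∞) (M : ℝ≥0∞) (x : X) :
    meanAlong T (fun y => min (F y) M) x ≤ min (meanAlong T F x) M := by
  refine le_min (ENNReal.div_le_div_right (Finset.sum_le_sum fun i _ => min_le_left _ _) _)
    (ENNReal.div_le_of_le_mul' ?_)
  calc ∑ i, min (F (T i x)) M ≤ ∑ _i : ι, M := Finset.sum_le_sum fun i _ => min_le_right _ _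
    _ = Fintype.card ι * M := by simp

variable [MeasurableSpace X] {μ : Measure X} {F : X → ℝ≥0∞}

theorem measurable_meanAlong {T : ι → X → X} (hT : ∀ i, Measurable (T i)) (hF : Measurable F) :
    Measurable (meanAlong T F) :=
  (Finset.measurable_fun_sum _ fun i _ => hF.comp (hT i)).div_const _

theorem lintegral_meanAlong [Nonempty ι] {T : ι → X → X} (hT : ∀ i, MeasurePreserving (T i) μ μ)
    (hF : Measurable F) : ∫⁻ x, meanAlong T F x ∂μ = ∫⁻ x, F x ∂μ := by
  have hm (i : ι) : Measurable fun x => F (T i x) := hF.comp (hT i).measurable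
  simp only [meanAlong, div_eq_mul_inv]
  rw [lintegral_mul_const _ (Finset.measurable_fun_sum _ fun i _ => hm i),
    lintegral_finsetSum _ fun i _ => hm i]
  simp only [(hT _).lintegral_comp hF, Finset.sum_const, Finset.card_univ, nsmul_eq_mul]
  rw [mul_right_comm, ENNReal.mul_inv_cancel (by simp) (by simp), one_mul]

theorem lintegral_le_of_forall_lintegral_min_le (hF : Measurable F) {C : ℝ≥0∞}
    (h : ∀ M : ℕ, ∫⁻ x, min (F x) M ∂μ ≤ C) : ∫⁻ x, F x ∂μ ≤ C := by
  have hsup (x : X) : F x = ⨆ M : ℕ, min (F x) M := by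
    rw [← inf_iSup_eq, ENNReal.iSup_natCast, inf_top_eq]
  rw [lintegral_congr hsup, lintegral_iSup (fun M => hF.min measurable_const)
    fun M M' hM x => min_le_min_left _ (by exact_mod_cast hM)]
  exact iSup_le h

variable {κ : ℕ → Type*} [∀ q, Fintype (κ q)] [∀ q, Nonempty (κ q)] {T : ∀ q, κ q → X → X}
  {c : ℝ≥0∞}

theorem mul_measure_univ_le_lintegral_of_tendsto_meanAlong
    (hT : ∀ q i, MeasurePreserving (T q i) μ μ) (hF : Measurable F)
    (hc : ∀ᵐ x ∂μ, Tendsto (fun q => meanAlong (T q) F x) atTop (nhds c)) :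
    c * μ Set.univ ≤ ∫⁻ x, F x ∂μ := by
  calc c * μ Set.univ = ∫⁻ x, liminf (fun q => meanAlong (T q) F x) atTop ∂μ := by
        rw [← lintegral_const]
        exact lintegral_congr_ae (hc.mono fun x hx => hx.liminf_eq.symm)
    _ ≤ liminf (fun q => ∫⁻ x, meanAlong (T q) F x ∂μ) atTop :=
        lintegral_liminf_le fun q => measurable_meanAlong (fun i => (hT q i).measurable) hF
    _ = ∫⁻ x, F x ∂μ := by simp only [lintegral_meanAlong (hT _) hF, liminf_const]

theorem lintegral_le_mul_measure_univ_of_tendsto_meanAlong [IsFiniteMeasure μ]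
    (hT : ∀ q i, MeasurePreserving (T q i) μ μ) (hF : Measurable F)
    (hc : ∀ᵐ x ∂μ, Tendsto (fun q => meanAlong (T q) F x) atTop (nhds c)) :
    ∫⁻ x, F x ∂μ ≤ c * μ Set.univ := by
  refine lintegral_le_of_forall_lintegral_min_le hF fun M => ?_
  have hlim : Tendsto (fun q => ∫⁻ x, min (meanAlong (T q) F x) M ∂μ) atTop
      (nhds (∫⁻ _, min c M ∂μ)) := by
    refine tendsto_lintegral_of_dominated_convergence (fun _ => (M : ℝ≥0∞))
      (fun q => (measurable_meanAlong (fun i => (hT q i).measurable) hF).min measurable_const)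
      (fun q => ae_of_all _ fun x => min_le_right _ _) ?_
      (hc.mono fun x hx => hx.min tendsto_const_nhds)
    rw [lintegral_const]
    finiteness
  have hle (q : ℕ) : ∫⁻ x, min (F x) M ∂μ ≤ ∫⁻ x, min (meanAlong (T q) F x) M ∂μ := by
    rw [← lintegral_meanAlong (hT q) (hF.min measurable_const)]
    exact lintegral_mono fun x => meanAlong_min_const_le (T q) F M x
  calc ∫⁻ x, min (F x) M ∂μ ≤ ∫⁻ _, min c M ∂μ := ge_of_tendsto' hlim hle
    _ ≤ ∫⁻ _, c ∂μ := lintegral_mono fun _ => min_le_left _ _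
    _ = c * μ Set.univ := lintegral_const c

theorem lintegral_eq_of_tendsto_meanAlong [IsFiniteMeasure μ]
    (hT : ∀ q i, MeasurePreserving (T q i) μ μ) (hF : Measurable F)
    (hc : ∀ᵐ x ∂μ, Tendsto (fun q => meanAlong (T q) F x) atTop (nhds c)) :
    ∫⁻ x, F x ∂μ = c * μ Set.univ :=
  (lintegral_le_mul_measure_univ_of_tendsto_meanAlong hT hF hc).antisymm
    (mul_measure_univ_le_lintegral_of_tendsto_meanAlong hT hF hc)

end Averaging

section Bind

variable {X Y : Type*} [MeasurableSpace X] [MeasurableSpace Y] {μ : Measure X} {κ : X → Measure Y}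

theorem aemeasurable_lintegral_of_bind (hκ : AEMeasurable κ μ) {f : Y → ℝ≥0∞}
    (hf : AEMeasurable f (μ.bind κ)) : AEMeasurable (fun x => ∫⁻ y, f y ∂κ x) μ :=
  (Measure.aemeasurable_lintegral hf).comp_aemeasurable hκ

theorem ae_integrable_of_integrable_bind (hκ : AEMeasurable κ μ) {f : Y → ℝ}
    (hf : Integrable f (μ.bind κ)) : ∀ᵐ x ∂μ, Integrable f (κ x) := by
  have hfin := hf.hasFiniteIntegral
  rw [HasFiniteIntegral, Measure.lintegral_bind hκ hf.aemeasurable.enorm] at hfin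
  filter_upwards [hκ.ae_of_bind hf.aemeasurable, ae_lt_top'
    (aemeasurable_lintegral_of_bind hκ hf.aemeasurable.enorm) hfin.ne] with x hx hx'
  exact ⟨hx.aestronglyMeasurable, hx'⟩

theorem integrable_toReal_lintegral_of_bind (hκ : AEMeasurable κ μ) {f : Y → ℝ≥0∞}
    (hf : AEMeasurable f (μ.bind κ)) (hfin : ∫⁻ y, f y ∂μ.bind κ ≠ ∞) :
    Integrable (fun x => (∫⁻ y, f y ∂κ x).toReal) μ := by
  rw [Measure.lintegral_bind hκ hf] at hfin
  exact integrable_toReal_of_lintegral_ne_top (aemeasurable_lintegral_of_bind hκ hf) hfin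

theorem toReal_lintegral_bind (hκ : AEMeasurable κ μ) {f : Y → ℝ≥0∞}
    (hf : AEMeasurable f (μ.bind κ)) (hfin : ∫⁻ y, f y ∂μ.bind κ ≠ ∞) :
    (∫⁻ y, f y ∂μ.bind κ).toReal = ∫ x, (∫⁻ y, f y ∂κ x).toReal ∂μ := by
  have hm := aemeasurable_lintegral_of_bind hκ hf
  rw [Measure.lintegral_bind hκ hf] at hfin ⊢
  exact (integral_toReal hm (ae_lt_top' hm hfin)).symm

theorem integral_bind (hκ : AEMeasurable κ μ) {f : Y → ℝ} (hf : Integrable f (μ.bind κ)) :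
    ∫ y, f y ∂μ.bind κ = ∫ x, ∫ y, f y ∂κ x ∂μ := by
  have hpos := hf.aemeasurable.ennreal_ofReal
  have hneg := hf.neg.aemeasurable.ennreal_ofReal
  have hpos_fin := hf.lintegral_lt_top.ne
  have hneg_fin := hf.neg.lintegral_lt_top.ne
  simp only [Pi.neg_apply] at hneg hneg_fin
  rw [integral_eq_lintegral_pos_part_sub_lintegral_neg_part hf,
    toReal_lintegral_bind hκ hpos hpos_fin, toReal_lintegral_bind hκ hneg hneg_fin,
    ← integral_sub (integrable_toReal_lintegral_of_bind hκ hpos hpos_fin)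
      (integrable_toReal_lintegral_of_bind hκ hneg hneg_fin)]
  exact integral_congr_ae ((ae_integrable_of_integrable_bind hκ hf).mono fun x hx =>
    (integral_eq_lintegral_pos_part_sub_lintegral_neg_part hx).symm)

end Bind

section LatticeSpace

variable {n : ℕ}

instance inst_s4 : PolishSpace (SLR n) :=
  have : PolishSpace (Matrix (Fin n) (Fin n) ℝ) := inferInstanceAs (PolishSpace (Fin n → Fin n → ℝ))
  Matrix.SpecialLinearGroup.isClosedEmbedding_val.polishSpace

instance : IsClosed (latticeGamma n : Set (SLR n)) :=
  (Int.isClosedEmbedding_coe_real.specialLinearGroup_map (f := Int.castRingHom ℝ)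
    (n := Fin n)).isClosed_range

theorem vecOf_mul (h g : SLR n) (m : Fin n → ℤ) :
    vecOf n (h * g) m = (h : Matrix (Fin n) (Fin n) ℝ) *ᵥ vecOf n g m := by
  simp [vecOf]

theorem vecOf_mul_map (g : SLR n) (γ : Matrix.SpecialLinearGroup (Fin n) ℤ) (m : Fin n → ℤ) :
    vecOf n (g * Matrix.SpecialLinearGroup.map (Int.castRingHom ℝ) γ) m =
      vecOf n g ((γ : Matrix (Fin n) (Fin n) ℤ) *ᵥ m) := by
  rw [vecOf_mul]
  refine congrArg (g.1 *ᵥ ·) (funext fun i => ?_)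
  exact ((Int.castRingHom ℝ).map_mulVec _ m i).symm

theorem vecOf_zero (g : SLR n) : vecOf n g 0 = 0 := by
  simp [vecOf, ← Pi.zero_def]

theorem vecOf_injective (g : SLR n) : Function.Injective (vecOf n g) := fun _ _ h =>
  Int.cast_injective.comp_left ((Matrix.SpecialLinearGroup.toLin' g).injective h)

theorem measurableEmbedding_vecOf (g : SLR n) :
    MeasurableEmbedding fun m : {m : Fin n → ℤ // m ≠ 0} => vecOf n g m.1 where
  injective := (vecOf_injective g).comp Subtype.val_injective
  measurable := measurable_of_countable _
  measurableSet_image' {s} _ := (s.to_countable.image _).measurableSet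

theorem measurable_vecOf_left (m : Fin n → ℤ) : Measurable fun g : SLR n => vecOf n g m :=
  have hcont : Continuous fun g : SLR n => vecOf n g m :=
    continuous_subtype_val.matrix_mulVec continuous_const
  hcont.measurable

theorem measurable_mulVec (h : SLR n) :
    Measurable fun x : Fin n → ℝ => (h : Matrix (Fin n) (Fin n) ℝ) *ᵥ x :=
  (continuous_const.matrix_mulVec continuous_id).measurable

theorem measurePreserving_mulVec (h : SLR n) :
    MeasurePreserving (fun x : Fin n → ℝ => (h : Matrix (Fin n) (Fin n) ℝ) *ᵥ x)
      volume volume :=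
  ⟨measurable_mulVec h, by
    simpa [Function.comp_def] using!
      Real.map_matrix_volume_pi_eq_smul_volume_pi (M := h.1) (by simp)⟩

/-- The counting measure of the set of nonzero vectors of the lattice `g ℤⁿ`. -/
def latticeMeasure (g : SLR n) : Measure (Fin n → ℝ) :=
  Measure.count.map fun m : {m : Fin n → ℤ // m ≠ 0} => vecOf n g m.1

theorem latticeMeasure_apply (g : SLR n) (s : Set (Fin n → ℝ)) :
    latticeMeasure g s = Measure.count {m : {m : Fin n → ℤ // m ≠ 0} | vecOf n g m.1 ∈ s} :=
  (measurableEmbedding_vecOf g).map_apply _ _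

theorem latticeMeasure_apply_of_zero_notMem (g : SLR n) {s : Set (Fin n → ℝ)} (hs : 0 ∉ s) :
    latticeMeasure g s = Measure.count (vecOf n g ⁻¹' s) := by
  rw [latticeMeasure_apply, ← Measure.count_injective_image Subtype.val_injective]
  congr 1
  ext m
  simpa using fun hm h0 => hs (by simpa [h0, vecOf_zero] using hm)

theorem latticeMeasure_singleton_zero (g : SLR n) : latticeMeasure g {0} = 0 := by
  rw [latticeMeasure_apply, Measure.count_eq_zero_iff, Set.eq_empty_iff_forall_notMem]
  exact fun m hm => m.2 (vecOf_injective g (hm.trans (vecOf_zero g).symm))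

theorem integral_latticeMeasure (g : SLR n) (f : (Fin n → ℝ) → ℝ) :
    ∫ x, f x ∂latticeMeasure g = ∑' m : {m : Fin n → ℤ // m ≠ 0}, f (vecOf n g m.1) := by
  rw [latticeMeasure, (measurableEmbedding_vecOf g).integral_map, Measure.count]
  simpa using integral_sum_dirac (f := fun m : {m : Fin n → ℤ // m ≠ 0} => f (vecOf n g m.1))
    (x := id) (c := 1) (by simp)

theorem measurable_latticeMeasure : Measurable (latticeMeasure (n := n)) := by
  refine Measure.measurable_of_measurable_coe _ fun s hs => ?_
  have hsum (g : SLR n) : latticeMeasure g s =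
      ∑' m : {m : Fin n → ℤ // m ≠ 0}, s.indicator 1 (vecOf n g m.1) := by
    rw [← lintegral_indicator_one hs, latticeMeasure, (measurableEmbedding_vecOf g).lintegral_map,
      lintegral_count]
  simp only [hsum]
  exact Measurable.tsum fun m => (measurable_one.indicator hs).comp (measurable_vecOf_left m.1)

theorem map_equiv_count {α β : Type*} [MeasurableSpace α] [DiscreteMeasurableSpace α]
    [MeasurableSpace β] [MeasurableSingletonClass β] (e : α ≃ β) :
    Measure.count.map e = Measure.count :=
  Measure.ext fun s hs => by
    rw [Measure.map_apply .of_discrete hs, ← e.image_symm_eq_preimage,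
      Measure.count_injective_image e.symm.injective]

theorem latticeMeasure_mul_of_mem (g : SLR n) {γ : SLR n} (hγ : γ ∈ latticeGamma n) :
    latticeMeasure (g * γ) = latticeMeasure g := by
  obtain ⟨δ, rfl⟩ := hγ
  let e : {m : Fin n → ℤ // m ≠ 0} ≃ {m : Fin n → ℤ // m ≠ 0} :=
    (Matrix.SpecialLinearGroup.toLin' δ).toEquiv.subtypeEquiv fun m => by simp
  have he : (fun m : {m : Fin n → ℤ // m ≠ 0} =>
      vecOf n (g * Matrix.SpecialLinearGroup.map (Int.castRingHom ℝ) δ) m.1) =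
      (fun m : {m : Fin n → ℤ // m ≠ 0} => vecOf n g m.1) ∘ e :=
    funext fun m => vecOf_mul_map g δ m.1
  rw [latticeMeasure, he, ← Measure.map_map (measurable_of_countable _) (measurable_of_countable _),
    map_equiv_count, latticeMeasure]

theorem map_mulVec_latticeMeasure (h g : SLR n) :
    (latticeMeasure g).map (fun x => (h : Matrix (Fin n) (Fin n) ℝ) *ᵥ x) =
      latticeMeasure (h * g) := by
  rw [latticeMeasure, Measure.map_map (measurable_mulVec h) (measurable_of_countable _),
    latticeMeasure]
  simp only [vecOf_mul, Function.comp_def]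

theorem latticeMeasure_out_mk (g : SLR n) :
    latticeMeasure (QuotientGroup.mk g : LatticeSpace n).out = latticeMeasure g := by
  obtain ⟨γ, hγ⟩ := QuotientGroup.mk_out_eq_mul (latticeGamma n) g
  rw [hγ, latticeMeasure_mul_of_mem g γ.2]

theorem map_mulVec_latticeMeasure_out (h : SLR n) (Λ : LatticeSpace n) :
    (latticeMeasure Λ.out).map (fun x => (h : Matrix (Fin n) (Fin n) ℝ) *ᵥ x) =
      latticeMeasure (h • Λ).out := by
  obtain ⟨g, rfl⟩ := QuotientGroup.mk_surjective Λ
  rw [latticeMeasure_out_mk, map_mulVec_latticeMeasure, ← latticeMeasure_out_mk]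
  rfl

theorem measurable_latticeMeasure_out :
    Measurable fun Λ : LatticeSpace n => latticeMeasure Λ.out := by
  have hmk : Measurable (QuotientGroup.mk : SLR n → LatticeSpace n) :=
    Continuous.measurable (γ := LatticeSpace n) QuotientGroup.continuous_mk
  intro s hs
  rw [← hmk.measurableSet_preimage_iff_of_surjective QuotientGroup.mk_surjective]
  simpa only [← Set.preimage_comp, Function.comp_def, latticeMeasure_out_mk] using
    measurable_latticeMeasure hs

end LatticeSpace

section LatticePoints

open Pointwise

variable {ι : Type*} [Finite ι]

theorem mem_span_int_range_basisFun_iff {x : ι → ℝ} :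
    x ∈ Submodule.span ℤ (Set.range (Pi.basisFun ℝ ι)) ↔ ∃ m : ι → ℤ, (fun i => (m i : ℝ)) = x := by
  simp only [Module.Basis.mem_span_iff_repr_mem, Pi.basisFun_repr, algebraMap_int_eq,
    Set.mem_range, eq_intCast, Classical.skolem, funext_iff]

theorem finite_setOf_smul_intCast_mem {s : Set (ι → ℝ)} (hs : Bornology.IsBounded s) {r : ℝ}
    (hr : r ≠ 0) : {m : ι → ℤ | (r • fun i => (m i : ℝ)) ∈ s}.Finite := by
  have := Fintype.ofFinite ι
  have hinj : Function.Injective fun (m : ι → ℤ) (i : ι) => (m i : ℝ) :=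
    Int.cast_injective.comp_left
  refine ((ZSpan.setFinite_inter (Pi.basisFun ℝ ι) (hs.smul₀ r⁻¹)).preimage hinj.injOn).subset
    fun m hm => ⟨?_, mem_span_int_range_basisFun_iff.mpr ⟨m, rfl⟩⟩
  exact (Set.mem_inv_smul_set_iff₀ hr _ _).mpr hm

theorem card_inter_smul_span_int_eq_ncard (s : Set (ι → ℝ)) {r : ℝ} (hr : r ≠ 0) :
    Nat.card ↑(s ∩ r • (Submodule.span ℤ (Set.range (Pi.basisFun ℝ ι)) : Set (ι → ℝ))) =
      {m : ι → ℤ | (r • fun i => (m i : ℝ)) ∈ s}.ncard := by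
  have hinj : Function.Injective fun (m : ι → ℤ) => r • fun i : ι => (m i : ℝ) :=
    (smul_right_injective _ hr).comp Int.cast_injective.comp_left
  rw [Nat.card_coe_set_eq, ← Set.ncard_image_of_injective _ hinj]
  congr 1
  ext x
  simp only [Set.mem_inter_iff, Set.mem_smul_set, SetLike.mem_coe, mem_span_int_range_basisFun_iff,
    Set.mem_image, Set.mem_ofPred_eq]
  constructor
  · rintro ⟨hx, _, ⟨m, rfl⟩, rfl⟩
    exact ⟨m, hx, rfl⟩
  · rintro ⟨m, hm, rfl⟩
    exact ⟨hm, _, ⟨m, rfl⟩, rfl⟩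

theorem tendsto_count_smul_intCast_mem_div_pow {ι : Type*} [Fintype ι] {s : Set (ι → ℝ)}
    (hs : Bornology.IsBounded s) (hsm : MeasurableSet s) (hfr : volume (frontier s) = 0) :
    Tendsto (fun R : ℕ => Measure.count {m : ι → ℤ | ((R : ℝ)⁻¹ • fun i => (m i : ℝ)) ∈ s} /
      (R : ℝ≥0∞) ^ Fintype.card ι) atTop (nhds (volume s)) := by
  have hlim := ENNReal.tendsto_ofReal (tendsto_card_div_pow_atTop_volume s hs hsm hfr)
  rw [ofReal_measureReal hs.measure_lt_top.ne] at hlim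
  refine hlim.congr' ((eventually_ne_atTop 0).mono fun R hR => ?_)
  have hR' : (R : ℝ)⁻¹ ≠ 0 := by positivity
  beta_reduce
  rw [card_inter_smul_span_int_eq_ncard s hR', ENNReal.ofReal_div_of_pos (by positivity),
    ENNReal.ofReal_pow (by positivity), ENNReal.ofReal_natCast, ENNReal.ofReal_natCast,
    Measure.count_apply (Set.to_countable _).measurableSet,
    ← (finite_setOf_smul_intCast_mem hs hR').cast_ncard_eq, ENat.toENNReal_coe]

end LatticePoints

theorem tendsto_latticeMeasure_inv_smul_preimage_div_pow {n : ℕ} (g : SLR n) {s : Set (Fin n → ℝ)}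
    (h0 : 0 ∉ s) (hs : Bornology.IsBounded s) (hsm : MeasurableSet s)
    (hfr : volume (frontier s) = 0) :
    Tendsto (fun R : ℕ => latticeMeasure g {x | (R : ℝ)⁻¹ • x ∈ s} / (R : ℝ≥0∞) ^ n) atTop
      (nhds (volume s)) := by
  let e : (Fin n → ℝ) ≃ₜ (Fin n → ℝ) :=
    (Matrix.SpecialLinearGroup.toLin' g).toContinuousLinearEquiv.toHomeomorph
  have hfr' : volume (frontier (e ⁻¹' s)) = 0 := by
    rw [← e.preimage_frontier]
    exact ((measurePreserving_mulVec g).measure_preimage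
      isClosed_frontier.measurableSet.nullMeasurableSet).trans hfr
  have hbdd : Bornology.IsBounded (e ⁻¹' s) := by
    rw [← e.image_symm]
    exact (Matrix.SpecialLinearGroup.toLin' g).symm.toContinuousLinearEquiv.lipschitz
      |>.isBounded_image hs
  have hvol : volume (e ⁻¹' s) = volume s :=
    (measurePreserving_mulVec g).measure_preimage hsm.nullMeasurableSet
  have hlim :=
    tendsto_count_smul_intCast_mem_div_pow hbdd (hsm.preimage e.continuous.measurable) hfr'
  rw [hvol, Fintype.card_fin] at hlim
  refine hlim.congr fun R => ?_
  rw [latticeMeasure_apply_of_zero_notMem g (by simpa using h0)]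
  congr
  ext m
  change g.1 *ᵥ _ ∈ s ↔ _
  rw [Matrix.mulVec_smul]
  rfl

section DoublePyramid

theorem mul_add_mul_pos_of_mul_pos {ε s t α β : ℝ} (hs : 0 < ε * s) (ht : 0 < ε * t) (hα : 0 ≤ α)
    (hβ : 0 ≤ β) (hαβ : α + β = 1) : 0 < ε * (α * s + β * t) := by
  have := convex_Ioi (0 : ℝ) hs ht hα hβ hαβ
  simp only [smul_eq_mul, Set.mem_Ioi] at this
  linarith

theorem div_mem_of_convex {J : Set ℝ} (hJ : Convex ℝ J) {ε s t x y α β : ℝ} (hs : 0 < ε * s)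
    (ht : 0 < ε * t) (hx : x / s ∈ J) (hy : y / t ∈ J) (hα : 0 ≤ α) (hβ : 0 ≤ β)
    (hαβ : α + β = 1) : (α * x + β * y) / (α * s + β * t) ∈ J := by
  have hpos := mul_add_mul_pos_of_mul_pos hs ht hα hβ hαβ
  have hε : ε ≠ 0 := left_ne_zero_of_mul hs.ne'
  have hs0 : s ≠ 0 := right_ne_zero_of_mul hs.ne'
  have ht0 : t ≠ 0 := right_ne_zero_of_mul ht.ne'
  have hst : α * s + β * t ≠ 0 := right_ne_zero_of_mul hpos.ne'
  have hcomb := hJ hx hy (a := α * (ε * s) / (ε * (α * s + β * t)))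
    (b := β * (ε * t) / (ε * (α * s + β * t))) (by positivity) (by positivity) (by field_simp)
  convert hcomb using 1
  simp only [smul_eq_mul]
  field_simp

variable {ι : Type*} [DecidableEq ι]

/-- The affine chart of projective space in which the `i`-th homogeneous coordinate is normalised to
`1`, recording the lost scale `z i` as the `i`-th entry of the result. -/
def projChart (i : ι) (z : ι → ℝ) : ι → ℝ :=
  Function.update (fun k => z k / z i) i (z i)

/-- The inverse of `projChart i` on the vectors with nonzero `i`-th coordinate. -/
def projChartInv (i : ι) (w : ι → ℝ) : ι → ℝ :=
  Function.update (fun k => w k * w i) i (w i)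

theorem projChartInv_projChart {i : ι} {z : ι → ℝ} (hz : z i ≠ 0) :
    projChartInv i (projChart i z) = z := by
  ext k
  obtain rfl | hk := eq_or_ne k i <;> simp [projChartInv, projChart, *]

theorem measurable_projChart (i : ι) : Measurable (projChart i) := by
  refine measurable_pi_iff.mpr fun k => ?_
  obtain rfl | hk := eq_or_ne k i
  · simpa [projChart] using measurable_pi_apply k
  · simpa [projChart, hk] using! (measurable_pi_apply k).div (measurable_pi_apply i)

theorem continuous_projChartInv (i : ι) : Continuous (projChartInv i) :=
  Continuous.update (by fun_prop) i (continuous_apply i)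

/-- The vectors whose coordinates in the chart `projChart i` lie in the half-open box from `a` to
`b`: two opposite truncated pyramids with apex `0` (one of them may be empty). -/
def doublePyramid (i : ι) (a b : ι → ℝ) : Set (ι → ℝ) :=
  {z | z i ≠ 0} ∩ projChart i ⁻¹' Set.univ.pi fun k => Set.Ico (a k) (b k)

theorem mem_doublePyramid_iff {i : ι} {a b z : ι → ℝ} :
    z ∈ doublePyramid i a b ↔ z i ≠ 0 ∧ z i ∈ Set.Ico (a i) (b i) ∧
      ∀ k : {k // k ≠ i}, z k / z i ∈ Set.Ico (a k) (b k) := by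
  simp only [doublePyramid, Set.mem_inter_iff, Set.mem_ofPred_eq, Set.mem_preimage,
    Set.mem_univ_pi, projChart, Subtype.forall,
    Function.forall_update_iff _ fun k x => x ∈ Set.Ico (a k) (b k)]

theorem smul_mem_doublePyramid_iff {i : ι} {a b z : ι → ℝ} {c : ℝ} (hc : c ≠ 0) :
    c • z ∈ doublePyramid i a b ↔ z i ≠ 0 ∧ c * z i ∈ Set.Ico (a i) (b i) ∧
      ∀ k : {k // k ≠ i}, z k / z i ∈ Set.Ico (a k) (b k) := by
  simp only [mem_doublePyramid_iff, Pi.smul_apply, smul_eq_mul, mul_ne_zero_iff_left hc,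
    mul_div_mul_left _ _ hc]

theorem zero_notMem_doublePyramid (i : ι) (a b : ι → ℝ) : 0 ∉ doublePyramid i a b :=
  fun h => h.1 rfl

theorem convex_doublePyramid_inter_mul_pos (i : ι) (a b : ι → ℝ) (ε : ℝ) :
    Convex ℝ (doublePyramid i a b ∩ {z | 0 < ε * z i}) := by
  rintro x ⟨hx, hxε⟩ y ⟨hy, hyε⟩ α β hα hβ hαβ
  rw [mem_doublePyramid_iff] at hx hy
  have hpos := mul_add_mul_pos_of_mul_pos hxε hyε hα hβ hαβ
  refine ⟨mem_doublePyramid_iff.mpr ⟨right_ne_zero_of_mul hpos.ne', ?_, fun k => ?_⟩, hpos⟩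
  · exact convex_Ico _ _ hx.2.1 hy.2.1 hα hβ hαβ
  · exact div_mem_of_convex (convex_Ico _ _) hxε hyε (hx.2.2 k) (hy.2.2 k) hα hβ hαβ

theorem doublePyramid_eq_union (i : ι) (a b : ι → ℝ) :
    doublePyramid i a b = (doublePyramid i a b ∩ {z | 0 < 1 * z i}) ∪
      (doublePyramid i a b ∩ {z | 0 < -1 * z i}) := by
  rw [← Set.inter_union_distrib_left, eq_comm, Set.inter_eq_left]
  intro z hz
  simpa [or_comm] using hz.1.lt_or_gt

theorem measurableSet_doublePyramid [Countable ι] (i : ι) (a b : ι → ℝ) :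
    MeasurableSet (doublePyramid i a b) := by
  refine .inter (measurable_pi_apply i (measurableSet_singleton 0).compl) ?_
  exact measurable_projChart i (.univ_pi fun k => measurableSet_Ico)

theorem isBounded_doublePyramid [Finite ι] (i : ι) (a b : ι → ℝ) :
    Bornology.IsBounded (doublePyramid i a b) := by
  have := Fintype.ofFinite ι
  have hcompact : IsCompact (projChartInv i '' Set.Icc a b) :=
    isCompact_Icc.image (continuous_projChartInv i)
  refine hcompact.isBounded.subset fun z hz => ⟨projChart i z, ?_, projChartInv_projChart hz.1⟩
  exact Set.pi_univ_Icc a b ▸ Set.pi_mono (fun _ _ => Set.Ico_subset_Icc_self) hz.2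

theorem volume_frontier_doublePyramid [Fintype ι] (i : ι) (a b : ι → ℝ) :
    volume (frontier (doublePyramid i a b)) = 0 := by
  rw [doublePyramid_eq_union]
  refine measure_mono_null ((frontier_union_subset _ _).trans
    (Set.union_subset_union Set.inter_subset_left Set.inter_subset_right)) ?_
  exact measure_union_null ((convex_doublePyramid_inter_mul_pos i a b 1).addHaar_frontier volume)
    ((convex_doublePyramid_inter_mul_pos i a b (-1)).addHaar_frontier volume)

end DoublePyramid

section Tiling

theorem exists_affine_preimages_tiling_Ico (a b : ℝ) {m : ℕ} (hm : m ≠ 0) :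
    ∃ σ : Fin m → ℝ, ∀ u, (u ∈ Set.Ico a b ↔ ∃ j, m * (u - σ j) ∈ Set.Ico a b) ∧
      ∀ j j', m * (u - σ j) ∈ Set.Ico a b → m * (u - σ j') ∈ Set.Ico a b → j = j' := by
  obtain hab | hab := le_or_gt b a
  · exact ⟨0, by simp [Set.Ico_eq_empty_of_le hab]⟩
  have hL : 0 < b - a := sub_pos.mpr hab
  have hm' : (0 : ℝ) < m := by positivity
  let x (u : ℝ) : ℝ := m * (u - a) / (b - a)
  have hx (u : ℝ) : u ∈ Set.Ico a b ↔ 0 ≤ x u ∧ x u < m := by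
    simp only [x, Set.mem_Ico, le_div_iff₀ hL, div_lt_iff₀ hL, zero_mul,
      mul_nonneg_iff_of_pos_left hm', mul_lt_mul_iff_right₀ hm', sub_nonneg, sub_lt_sub_iff_right]
  -- The shift is chosen so that the condition says that `u` lies in the `j`-th of `m` equal parts.
  have hmem (u : ℝ) (j : ℕ) : m * (u - (a + (j * (b - a) - a) / m)) ∈ Set.Ico a b ↔
      j ≤ x u ∧ x u < j + 1 := by
    have heq : m * (u - (a + (j * (b - a) - a) / m)) = m * (u - a) - j * (b - a) + a := by
      field_simp
      ring
    rw [heq, le_div_iff₀ hL, div_lt_iff₀ hL, Set.mem_Ico]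
    constructor <;> rintro ⟨h₁, h₂⟩ <;> constructor <;> linarith
  refine ⟨fun j => a + (j * (b - a) - a) / m, fun u => ⟨?_, fun j j' => ?_⟩⟩
  · rw [hx, exists_congr fun j : Fin m => hmem u j]
    refine ⟨fun ⟨h₀, h⟩ => ⟨⟨⌊x u⌋₊, (Nat.floor_lt h₀).mpr h⟩, Nat.floor_le h₀,
      Nat.lt_floor_add_one _⟩, fun ⟨j, h₁, h₂⟩ => ⟨j.val.cast_nonneg.trans h₁, h₂.trans_le ?_⟩⟩
    exact_mod_cast j.2
  · intro hj hj'
    rw [hmem] at hj hj'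
    have h₀ : 0 ≤ x u := j.val.cast_nonneg.trans hj.1
    rw [Fin.ext_iff, ← (Nat.floor_eq_iff h₀).mpr hj, ← (Nat.floor_eq_iff h₀).mpr hj']

variable {ι : Type*} [Fintype ι] [DecidableEq ι]

theorem exists_specialLinearGroup_shear_mul_diagonal (i : ι) {t : ℝ} (ht : t ≠ 0)
    (σ : {k // k ≠ i} → ℝ) :
    ∃ g : Matrix.SpecialLinearGroup ι ℝ, ∀ z : ι → ℝ,
      (g.1 *ᵥ z) i = (t ^ (Fintype.card ι - 1))⁻¹ * z i ∧
        ∀ k : {k // k ≠ i}, (g.1 *ᵥ z) k = t * (z k - σ k * z i) := by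
  let d : ι → ℝ := Function.update (fun _ => t) i (t ^ (Fintype.card ι - 1))⁻¹
  let v : ι → ℝ := Function.extend Subtype.val (-σ) 0
  have hvi : v i = 0 := Function.extend_apply' _ _ _ (by simp)
  have hv (k : {k // k ≠ i}) : v k = -σ k := Subtype.val_injective.extend_apply _ _ _
  have hd : ∏ k, d k = 1 := by
    rw [Finset.prod_update_of_mem (Finset.mem_univ i), Finset.prod_const, Finset.card_sdiff]
    simp [ht]
  have hdet : (Matrix.diagonal d * (1 + Matrix.vecMulVec v (Pi.single i 1))).det = 1 := by
    rw [Matrix.det_mul, Matrix.det_diagonal, hd, Matrix.vecMulVec_eq Unit,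
      Matrix.det_one_add_replicateCol_mul_replicateRow]
    simp [hvi]
  have hmul (z : ι → ℝ) (k : ι) :
      ((Matrix.diagonal d * (1 + Matrix.vecMulVec v (Pi.single i 1))) *ᵥ z) k =
        d k * (z k + v k * z i) := by
    rw [← Matrix.mulVec_mulVec, Matrix.mulVec_diagonal, Matrix.add_mulVec,
      Matrix.vecMulVec_mulVec]
    simp [mul_comm (z i)]
  refine ⟨⟨_, hdet⟩, fun z => ⟨?_, fun k => ?_⟩⟩
  · simp [hmul, hvi, d]
  · simp [hmul, hv, d, k.2, sub_eq_add_neg]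

theorem mulVec_mem_doublePyramid_iff {i : ι} {a b z : ι → ℝ} {t : ℝ} (ht : t ≠ 0)
    {σ : {k // k ≠ i} → ℝ} {g : Matrix.SpecialLinearGroup ι ℝ}
    (hi : (g.1 *ᵥ z) i = (t ^ (Fintype.card ι - 1))⁻¹ * z i)
    (hk : ∀ k : {k // k ≠ i}, (g.1 *ᵥ z) k = t * (z k - σ k * z i)) :
    g.1 *ᵥ z ∈ doublePyramid i a b ↔ z i ≠ 0 ∧
      (t ^ (Fintype.card ι - 1))⁻¹ * z i ∈ Set.Ico (a i) (b i) ∧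
        ∀ k : {k // k ≠ i}, t ^ Fintype.card ι * (z k / z i - σ k) ∈ Set.Ico (a k) (b k) := by
  have : Nonempty ι := ⟨i⟩
  rw [mem_doublePyramid_iff, hi]
  simp only [hk]
  have hne : (t ^ (Fintype.card ι - 1))⁻¹ * z i ≠ 0 ↔ z i ≠ 0 := by simp [ht]
  rw [hne]
  refine and_congr_right fun hz => and_congr_right fun _ => forall_congr' fun k => ?_
  have hcoord : t * (z k - σ k * z i) / ((t ^ (Fintype.card ι - 1))⁻¹ * z i) =
      t ^ Fintype.card ι * (z k / z i - σ k) := by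
    rw [← mul_pow_sub_one Fintype.card_ne_zero t]
    field_simp
  rw [hcoord]

theorem exists_specialLinearGroup_preimages_tiling_smul_doublePyramid (i : ι) (a b : ι → ℝ) {q : ℕ}
    (hq : q ≠ 0) :
    ∃ g : ({k // k ≠ i} → Fin (q ^ Fintype.card ι)) → Matrix.SpecialLinearGroup ι ℝ,
      Pairwise (Function.onFun Disjoint fun p => {z | (g p).1 *ᵥ z ∈ doublePyramid i a b}) ∧
        ⋃ p, {z | (g p).1 *ᵥ z ∈ doublePyramid i a b} =
          {z | ((q : ℝ) ^ (Fintype.card ι - 1))⁻¹ • z ∈ doublePyramid i a b} := by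
  have hq' : (q : ℝ) ≠ 0 := by positivity
  choose σ hσ using fun k : {k // k ≠ i} =>
    exists_affine_preimages_tiling_Ico (a k) (b k) (pow_ne_zero (Fintype.card ι) hq)
  choose g hg using fun p : {k // k ≠ i} → Fin (q ^ Fintype.card ι) =>
    exists_specialLinearGroup_shear_mul_diagonal i hq' fun k => σ k (p k)
  push_cast at hσ
  have hmem (p) (z : ι → ℝ) :=
    mulVec_mem_doublePyramid_iff (a := a) (b := b) hq' (hg p z).1 (hg p z).2
  refine ⟨g, fun p p' hne => Set.disjoint_left.mpr fun z hz hz' => hne (funext fun k => ?_), ?_⟩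
  · exact (hσ k _).2 _ _ (((hmem p z).mp hz).2.2 k) (((hmem p' z).mp hz').2.2 k)
  · have hcoord (z : ι → ℝ) : (∀ k : {k // k ≠ i}, z k / z i ∈ Set.Ico (a k) (b k)) ↔
        ∃ p : {k // k ≠ i} → Fin (q ^ Fintype.card ι), ∀ k : {k // k ≠ i},
          q ^ Fintype.card ι * (z k / z i - σ k (p k)) ∈ Set.Ico (a k) (b k) :=
      (forall_congr' fun k => (hσ k _).1).trans Classical.skolem
    ext z
    simp only [Set.mem_iUnion, Set.mem_ofPred_eq, hmem, exists_and_left, hcoord,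
      smul_mem_doublePyramid_iff (inv_ne_zero (pow_ne_zero _ hq'))]

end Tiling

section MeasureExt

theorem isCountablySpanning_Ico :
    IsCountablySpanning {s : Set ℝ | ∃ l u : ℝ, l < u ∧ Set.Ico l u = s} := by
  refine ⟨fun m : ℕ => Set.Ico (-(m + 1) : ℝ) (m + 1), fun m => ⟨_, _, by linarith, rfl⟩,
    Set.eq_univ_of_forall fun x => ?_⟩
  obtain ⟨m, hm⟩ := exists_nat_gt |x|
  have hx := abs_lt.mp (hm.trans (lt_add_one _))
  exact Set.mem_iUnion.mpr ⟨m, hx.1.le, hx.2⟩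

variable {ι : Type*} [Finite ι] {μ ν : Measure (ι → ℝ)}

theorem measure_ext_pi_Ico
    (hfin : ∀ a b : ι → ℝ, μ (Set.univ.pi fun k => Set.Ico (a k) (b k)) ≠ ∞)
    (h : ∀ a b : ι → ℝ, μ (Set.univ.pi fun k => Set.Ico (a k) (b k)) =
      ν (Set.univ.pi fun k => Set.Ico (a k) (b k))) : μ = ν := by
  let C : ι → Set (Set ℝ) := fun _ => {s | ∃ l u : ℝ, l < u ∧ Set.Ico l u = s}
  have hgen (k : ι) : MeasurableSpace.generateFrom (C k) = Real.measurableSpace :=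
    (BorelSpace.measurable_eq.trans (borel_eq_generateFrom_Ico ℝ)).symm
  have hbox : ∀ S ∈ Set.univ.pi '' Set.univ.pi C,
      ∃ a b : ι → ℝ, (Set.univ.pi fun k => Set.Ico (a k) (b k)) = S := by
    rintro _ ⟨s, hs, rfl⟩
    choose a b _ hs using fun k => hs k (Set.mem_univ k)
    exact ⟨a, b, congrArg _ (funext hs)⟩
  obtain ⟨B, hBC, hB⟩ := IsCountablySpanning.pi fun _ : ι => isCountablySpanning_Ico
  refine Measure.ext_of_generateFrom_of_iUnion _ B
    (generateFrom_eq_pi hgen fun _ => isCountablySpanning_Ico).symm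
    (IsPiSystem.pi fun _ => isPiSystem_Ico id id) hB hBC (fun m => ?_) fun S hS => ?_
  · obtain ⟨a, b, hab⟩ := hbox _ (hBC m)
    exact hab ▸ hfin a b
  · obtain ⟨a, b, rfl⟩ := hbox S hS
    exact h a b

variable [DecidableEq ι]

theorem map_projChartInv_map_projChart_restrict (i : ι) (μ : Measure (ι → ℝ)) :
    ((μ.restrict {z | z i ≠ 0}).map (projChart i)).map (projChartInv i) =
      μ.restrict {z | z i ≠ 0} := by
  have hms : MeasurableSet {z : ι → ℝ | z i ≠ 0} :=
    measurable_pi_apply i (measurableSet_singleton 0).compl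
  rw [Measure.map_map (continuous_projChartInv i).measurable (measurable_projChart i)]
  exact (Measure.map_congr ((ae_restrict_mem hms).mono fun z => projChartInv_projChart)).trans
    Measure.map_id

theorem map_projChart_restrict_pi_Ico (i : ι) (μ : Measure (ι → ℝ)) (a b : ι → ℝ) :
    (μ.restrict {z | z i ≠ 0}).map (projChart i) (Set.univ.pi fun k => Set.Ico (a k) (b k)) =
      μ (doublePyramid i a b) := by
  have hbox : MeasurableSet (Set.univ.pi fun k => Set.Ico (a k) (b k)) :=
    .univ_pi fun k => measurableSet_Ico
  rw [Measure.map_apply (measurable_projChart i) hbox,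
    Measure.restrict_apply (measurable_projChart i hbox), Set.inter_comm, doublePyramid]

theorem measure_ext_doublePyramid (hfin : ∀ i a b, μ (doublePyramid i a b) ≠ ∞)
    (h : ∀ i a b, μ (doublePyramid i a b) = ν (doublePyramid i a b)) (h0 : μ {0} = ν {0}) :
    μ = ν := by
  have hchart (i : ι) : μ.restrict {z | z i ≠ 0} = ν.restrict {z | z i ≠ 0} := by
    rw [← map_projChartInv_map_projChart_restrict i μ,
      ← map_projChartInv_map_projChart_restrict i ν]
    congr 1
    refine measure_ext_pi_Ico (fun a b => ?_) fun a b => ?_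
    all_goals simp only [map_projChart_restrict_pi_Ico]
    · exact hfin i a b
    · exact h i a b
  have hcover : (⋃ i, {z : ι → ℝ | z i ≠ 0}) = {0}ᶜ := by
    ext z
    simp [funext_iff]
  have hcompl : μ.restrict {0}ᶜ = ν.restrict {0}ᶜ := by
    rw [← hcover, Measure.restrict_iUnion_congr]
    exact hchart
  have hzero : μ.restrict {0} = ν.restrict {0} := by
    rw [Measure.restrict_singleton, Measure.restrict_singleton, h0]
  rw [← Measure.restrict_add_restrict_compl (μ := μ) (measurableSet_singleton 0), hcompl, hzero,
    Measure.restrict_add_restrict_compl (measurableSet_singleton 0)]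

end MeasureExt

section MeanValue

variable {n : ℕ}

theorem exists_meanAlong_latticeMeasure_doublePyramid_eq (i : Fin n) (a b : Fin n → ℝ) {q : ℕ}
    (hq : q ≠ 0) :
    ∃ g : ({k // k ≠ i} → Fin (q ^ n)) → SLR n, ∀ Λ : LatticeSpace n,
      meanAlong (fun p Λ => g p • Λ)
          (fun Λ : LatticeSpace n => latticeMeasure Λ.out (doublePyramid i a b)) Λ =
        latticeMeasure Λ.out {x | ((q ^ (n - 1) : ℕ) : ℝ)⁻¹ • x ∈ doublePyramid i a b} /
          ((q ^ (n - 1) : ℕ) : ℝ≥0∞) ^ n := by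
  have htiling := exists_specialLinearGroup_preimages_tiling_smul_doublePyramid i a b hq
  rw [Fintype.card_fin] at htiling
  obtain ⟨g, hdisj, hunion⟩ := htiling
  refine ⟨g, fun Λ => ?_⟩
  have hP := measurableSet_doublePyramid i a b
  rw [meanAlong, Nat.cast_pow, ← hunion, measure_iUnion hdisj fun p => measurable_mulVec (g p) hP,
    tsum_fintype]
  congr 1
  · refine Finset.sum_congr rfl fun p _ => ?_
    rw [← map_mulVec_latticeMeasure_out, Measure.map_apply (measurable_mulVec (g p)) hP]
    rfl
  · simp [← pow_mul, mul_comm]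

variable {μ : Measure (LatticeSpace n)} [IsFiniteMeasure μ]
  [SMulInvariantMeasure (SLR n) (LatticeSpace n) μ]

theorem lintegral_latticeMeasure_doublePyramid (hn : 2 ≤ n) (i : Fin n) (a b : Fin n → ℝ) :
    ∫⁻ Λ, latticeMeasure Λ.out (doublePyramid i a b) ∂μ =
      volume (doublePyramid i a b) * μ Set.univ := by
  choose g hg using fun q : ℕ =>
    exists_meanAlong_latticeMeasure_doublePyramid_eq i a b q.succ_ne_zero
  have : NeZero n := ⟨by lia⟩
  have hR : Tendsto (fun q : ℕ => (q + 1) ^ (n - 1)) atTop atTop :=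
    (tendsto_pow_atTop (by lia)).comp (tendsto_add_atTop_nat 1)
  refine lintegral_eq_of_tendsto_meanAlong (T := fun q p Λ => g q p • Λ)
    (fun q p => measurePreserving_smul (g q p) μ)
    ((Measure.measurable_coe (measurableSet_doublePyramid i a b)).comp
      measurable_latticeMeasure_out) (ae_of_all _ fun Λ => ?_)
  simp only [hg]
  exact (tendsto_latticeMeasure_inv_smul_preimage_div_pow Λ.out (zero_notMem_doublePyramid i a b)
    (isBounded_doublePyramid i a b) (measurableSet_doublePyramid i a b)
    (volume_frontier_doublePyramid i a b)).comp hR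

theorem bind_latticeMeasure_out (hn : 2 ≤ n) :
    μ.bind (fun Λ => latticeMeasure Λ.out) = μ Set.univ • volume := by
  have hbind {s : Set (Fin n → ℝ)} (hs : MeasurableSet s) :=
    Measure.bind_apply hs (measurable_latticeMeasure_out.aemeasurable (μ := μ))
  have hP (i : Fin n) (a b : Fin n → ℝ) :
      (μ.bind fun Λ => latticeMeasure Λ.out) (doublePyramid i a b) =
        (μ Set.univ • volume) (doublePyramid i a b) := by
    rw [hbind (measurableSet_doublePyramid i a b), lintegral_latticeMeasure_doublePyramid hn,
      mul_comm, Measure.smul_apply, smul_eq_mul]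
  refine measure_ext_doublePyramid (fun i a b => ?_) hP ?_
  · rw [hP, Measure.smul_apply, smul_eq_mul]
    exact ENNReal.mul_ne_top (measure_ne_top μ _) (isBounded_doublePyramid i a b).measure_lt_top.ne
  · have : Nonempty (Fin n) := ⟨0, by lia⟩
    simp [hbind, latticeMeasure_singleton_zero]

theorem siegel_integral_formula_general (hn : 2 ≤ n) {f : (Fin n → ℝ) → ℝ} (hf : Integrable f) :
    ∫ Λ, (∑' m : {m : Fin n → ℤ // m ≠ 0}, f (vecOf n Λ.out m.1)) ∂μ =
      μ.real Set.univ * ∫ x, f x := by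
  have hf' : Integrable f (μ.bind fun Λ => latticeMeasure Λ.out) := by
    rw [bind_latticeMeasure_out (μ := μ) hn]
    exact hf.smul_measure (measure_ne_top μ _)
  calc ∫ Λ, (∑' m : {m : Fin n → ℤ // m ≠ 0}, f (vecOf n Λ.out m.1)) ∂μ
      = ∫ Λ : LatticeSpace n, ∫ x, f x ∂latticeMeasure Λ.out ∂μ := by
        simp only [integral_latticeMeasure]
    _ = ∫ x, f x ∂μ.bind fun Λ => latticeMeasure Λ.out :=
        (integral_bind measurable_latticeMeasure_out.aemeasurable hf').symm
    _ = μ.real Set.univ * ∫ x, f x := by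
        rw [bind_latticeMeasure_out (μ := μ) hn, integral_smul_measure, Measure.real, smul_eq_mul]

end MeanValue

/-- **Siegel integral formula.** For a bounded, compactly supported measurable
`f : ℝⁿ → ℝ`, the average over `X_n` of `Λ ↦ Σ_{0 ≠ v ∈ Λ} f(v)` equals `∫_{ℝⁿ} f dm`. -/
theorem siegel_integral_formula (n : ℕ) (hn : 2 ≤ n)
    (μ : Measure (LatticeSpace n)) [IsProbabilityMeasure μ]
    (hinv : ∀ (g : SLR n) (s : Set (LatticeSpace n)), μ ((fun x => g • x) ⁻¹' s) = μ s)
    (f : (Fin n → ℝ) → ℝ) (hmeas : Measurable f)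
    (hbd : ∃ C : ℝ, ∀ x, |f x| ≤ C) (hsupp : HasCompactSupport f) :
    ∫ Λ, (∑' m : {m : Fin n → ℤ // m ≠ 0}, f (vecOf n Λ.out m.1)) ∂μ =
      ∫ x, f x ∂(volume : Measure (Fin n → ℝ)) := by
  obtain ⟨C, hC⟩ := hbd
  have : SMulInvariantMeasure (SLR n) (LatticeSpace n) μ := ⟨fun g s _ => hinv g s⟩
  have hf : Integrable f := memLp_one_iff_integrable.mp <|
    hsupp.memLp_of_bound hmeas.aestronglyMeasurable C (ae_of_all _ hC)
  simpa using siegel_integral_formula_general (μ := μ) hn hf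
end
end
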